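/- Let G be a finitely generated group admitting a minimal, non-elliptic action without inversions on a simplicial tree T, with every edge stabiliser finitely generated, undistorted in G, and satisfying (∂_M E, G) = ∅. If a connected component C of ∂_M G is not a singleton, then there exists a vertex x ∈ T such that C is contained in the image of the natural inclusion (∂_M G_x, G) → ∂_M G, where G_x is the stabiliser of x. -/

import Mathlib

/-!
Fix a base vertex `p` of the tree and compare the Cayley graph of `G` with the tree through the
orbit map `g ↦ g • p`. The frontier `Front` of a tree edge is the set of vertices of the Cayley
graph at which the orbit map crosses the edge; it lies at bounded distance from a coset of an
edge group, and there are finitely many frontiers up to translation.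

* `edge_bound`, `front_bound`: an `N`-Morse geodesic spends a uniformly bounded time near any
  frontier. Otherwise ever longer `N`-Morse geodesics have both ends near a fixed edge group `E`;
  the geodesics of `E` joining these ends fellow travel them and converge to a ray of `E` which is
  Morse in `G`, contradicting `(∂_M E, G) = ∅`.
* `ev_component`: hence a Morse ray from `1` ends up on one side of each edge, and which one is
  decided at a time depending only on the edge and the Morse gauge. So each edge splits `∂_M G`
  into two clopen pieces, and rays in one connected component end on the same side of every edge.
* `near_vertex`: if some vertex `x` is on the chosen side of every edge at `x`, each ray of the
  component makes only bounded excursions through the edges at `x`, so it stays near the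
  stabiliser of `x`.
* `near_of_common_edges`: if there is no such vertex, the chosen sides point to an end of the tree,
  and all rays of the component cross the infinitely many edges leading to it. By
  `crossings_close`, two Morse rays from `1` meet a common frontier at uniformly close points: the
  point nearest to `1` on a quasi-geodesic in the frontier joining them is near both rays. So any
  two rays of the component are at finite Hausdorff distance, and the component is a singleton.
-/

open Set Filter Topology
open scoped ENNReal

namespace MorseGoG

/-! ## Metric notions relative to an explicit distance function

Throughout, distances are given by an explicit function `d : X → X → ℝ`, so that the same
notions apply to metric spaces (`d = dist`), to groups with word metrics, and to subgroups
with their own word metrics. -/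

variable {X : Type*}

/-- `γ` is a `C`-quasi-geodesic on the parameter set `I ⊆ ℝ` with respect to `d`:
`C ≥ 1` and `|s−t|/C − C ≤ d (γ s) (γ t) ≤ C|s−t| + C` for all `s, t ∈ I`. -/
def IsQG (d : X → X → ℝ) (C : ℝ) (I : Set ℝ) (γ : ℝ → X) : Prop :=
  1 ≤ C ∧ ∀ s ∈ I, ∀ t ∈ I,
    |s - t| / C - C ≤ d (γ s) (γ t) ∧ d (γ s) (γ t) ≤ C * |s - t| + C

/-- `x` lies in the (closed) `r`-neighbourhood of `A` with respect to `d`. -/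
def InNbhd (d : X → X → ℝ) (A : Set X) (r : ℝ) (x : X) : Prop :=
  ∃ a ∈ A, d x a ≤ r

/-- The set `A` (e.g. the image of a quasi-geodesic) is `N`-Morse with respect to `d`:
every `C`-quasi-geodesic segment with endpoints on `A` is contained in the
`N C`-neighbourhood of `A`. -/
def MorseSet (d : X → X → ℝ) (N : ℝ → ℝ) (A : Set X) : Prop :=
  ∀ C : ℝ, 1 ≤ C → ∀ a b : ℝ, a ≤ b → ∀ α : ℝ → X,
    IsQG d C (Set.Icc a b) α → α a ∈ A → α b ∈ A →
    ∀ t ∈ Set.Icc a b, InNbhd d A (N C) (α t)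

/-- `A` is Morse: it is `N`-Morse for some Morse gauge `N`. -/
def IsMorse (d : X → X → ℝ) (A : Set X) : Prop := ∃ N : ℝ → ℝ, MorseSet d N A

/-- A discrete geodesic ray: the sequence of vertices of a geodesic ray in a graph. -/
def IsGeodSeq (d : X → X → ℝ) (γ : ℕ → X) : Prop :=
  ∀ m n : ℕ, d (γ m) (γ n) = |(m : ℝ) - (n : ℝ)|

/-- A discrete geodesic segment of length `n`. -/
def IsGeodSeg (d : X → X → ℝ) (n : ℕ) (γ : ℕ → X) : Prop :=
  ∀ i ≤ n, ∀ j ≤ n, d (γ i) (γ j) = |(i : ℝ) - (j : ℝ)|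

/-- A discrete `C`-quasi-geodesic ray. -/
def IsQGSeq (d : X → X → ℝ) (C : ℝ) (γ : ℕ → X) : Prop :=
  1 ≤ C ∧ ∀ m n : ℕ,
    |(m : ℝ) - n| / C - C ≤ d (γ m) (γ n) ∧ d (γ m) (γ n) ≤ C * |(m : ℝ) - n| + C

/-- Two sets are at finite Hausdorff distance with respect to `d`. -/
def BddHD (d : X → X → ℝ) (A B : Set X) : Prop :=
  ∃ r : ℝ, (∀ a ∈ A, InNbhd d B r a) ∧ (∀ b ∈ B, InNbhd d A r b)

/-- A discrete edge path with `n` steps: consecutive points are at distance at most `1`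
(i.e. equal or joined by an edge, in a graph whose vertex set carries the metric `d`). -/
def IsEdgePath (d : X → X → ℝ) (n : ℕ) (c : ℕ → X) : Prop :=
  ∀ i < n, d (c i) (c (i + 1)) ≤ 1

/-- Combinatorial divergence of a discrete ray `γ` in a graph with vertex distance `d`:
the infimum, over `s ≥ r` and over edge paths joining `γ (s - r)` to `γ (s + r)` and
avoiding the ball of radius `ε·r` around `γ s`, of the length of the path. -/
noncomputable def gdivergence (d : X → X → ℝ) (γ : ℕ → X) (r : ℕ) (ε : ℝ) : ℝ≥0∞ :=
  ⨅ (s : ℕ) (_ : r ≤ s) (n : ℕ) (c : ℕ → X) (_ : IsEdgePath d n c)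
    (_ : c 0 = γ (s - r)) (_ : c n = γ (s + r))
    (_ : ∀ i ≤ n, ε * r < d (c i) (γ s)), (n : ℝ≥0∞)

/-! ## Geodesic metric spaces, geodesic rays, divergence -/

variable {Y : Type*} [MetricSpace Y]

/-- A geodesic metric space: any two points are joined by an isometrically parametrised path. -/
def IsGeodesicSpace (Y : Type*) [MetricSpace Y] : Prop :=
  ∀ x y : Y, ∃ γ : ℝ → Y, γ 0 = x ∧ γ (dist x y) = y ∧
    ∀ s ∈ Set.Icc 0 (dist x y), ∀ t ∈ Set.Icc 0 (dist x y), dist (γ s) (γ t) = |s - t|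

/-- A geodesic ray (defined on `[0,∞)` and extended constantly to negative times). -/
def IsGeodRay (γ : ℝ → Y) : Prop :=
  (∀ s t : ℝ, 0 ≤ s → 0 ≤ t → dist (γ s) (γ t) = |s - t|) ∧ ∀ t : ℝ, γ t = γ (max t 0)

theorem IsGeodRay.lipschitz {γ : ℝ → Y} (h : IsGeodRay γ) : LipschitzWith 1 γ := by
  apply LipschitzWith.of_dist_le_mul
  intro s t
  rw [h.2 s, h.2 t, h.1 _ _ (le_max_right s 0) (le_max_right t 0)]
  rw [NNReal.coe_one, one_mul, Real.dist_eq]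
  exact abs_max_sub_max_le_abs s t 0

/-- Divergence function `δ_γ(r, ε)` of a quasi-geodesic ray `γ` in a metric space:
the infimum of lengths (total variations) of paths connecting `γ (s - r)` to `γ (s + r)`
outside the closed ball `B(γ s, εr)`, over all `s ≥ r`. -/
noncomputable def divergence (γ : ℝ → Y) (r ε : ℝ) : ℝ≥0∞ :=
  ⨅ (s : ℝ) (_ : r ≤ s) (c : ℝ → Y) (_ : ContinuousOn c (Set.Icc 0 1))
    (_ : c 0 = γ (s - r)) (_ : c 1 = γ (s + r))
    (_ : ∀ t ∈ Set.Icc (0 : ℝ) 1, ε * r < dist (c t) (γ s)),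
    eVariationOn c (Set.Icc 0 1)

/-- Quasi-isometric embedding between sets carrying explicit distance functions. -/
def IsQIEmb {Z W : Type*} (dZ : Z → Z → ℝ) (dW : W → W → ℝ) (f : Z → W) : Prop :=
  ∃ C : ℝ, 1 ≤ C ∧ ∀ z z' : Z,
    dZ z z' / C - C ≤ dW (f z) (f z') ∧ dW (f z) (f z') ≤ C * dZ z z' + C

/-! ## The Morse boundary of a proper geodesic metric space -/

/-- A Morse geodesic ray based at `p` in the metric space `Y`. -/
structure MRay (Y : Type*) [MetricSpace Y] (p : Y) where
  ray : ℝ → Y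
  base : ray 0 = p
  geod : IsGeodRay ray
  morse : IsMorse dist (Set.range ray)

/-- Two rays are identified when they are at finite Hausdorff distance. -/
def mrayRel (p : Y) (x y : MRay Y p) : Prop :=
  BddHD dist (Set.range x.ray) (Set.range y.ray)

/-- The Morse boundary of a metric space, as a set: Morse geodesic rays based at `p`,
modulo finite Hausdorff distance. -/
def MorseBoundarySp (Y : Type*) [MetricSpace Y] (p : Y) : Type _ := Quot (mrayRel p)

/-- The `N`-Morse stratum: `N`-Morse geodesic rays based at `p`. -/
def NRaysSp (Y : Type*) [MetricSpace Y] (p : Y) (N : ℝ → ℝ) : Type _ :=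
  {γ : MRay Y p // MorseSet dist N (Set.range γ.ray)}

/-- Each stratum of rays carries the compact-open topology (as a set of continuous maps). -/
noncomputable instance NRaysSp.instTop (p : Y) (N : ℝ → ℝ) : TopologicalSpace (NRaysSp Y p N) :=
  TopologicalSpace.induced
    (fun γ => (⟨γ.1.ray, γ.1.geod.lipschitz.continuous⟩ : C(ℝ, Y))) inferInstance

/-- The Morse boundary carries the direct limit topology over all Morse gauges:
a set is open iff its intersection with each stratum `∂_M^N Y_p` is open there. -/
noncomputable instance MorseBoundarySp.instTop (p : Y) :
    TopologicalSpace (MorseBoundarySp Y p) :=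
  ⨆ N : ℝ → ℝ,
    TopologicalSpace.coinduced (fun γ : NRaysSp Y p N => Quot.mk (mrayRel p) γ.1) inferInstance

/-- The relative Morse boundary `(∂_M Y, f)` of a quasi-isometric embedding `f : Y → X`:
classes of Morse rays of `Y` whose image under `f` is Morse in `X`.  It is a subset of
`∂_M Y` (and carries the subspace topology). -/
def relBoundarySp {Y X : Type*} [MetricSpace Y] [MetricSpace X] (p : Y) (f : Y → X) :
    Set (MorseBoundarySp Y p) :=
  {ξ | ∃ γ : MRay Y p, Quot.mk (mrayRel p) γ = ξ ∧ IsMorse dist (f '' Set.range γ.ray)}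

/-! ## Word metrics and Morse boundaries of finitely generated groups -/

variable {G : Type*} [Group G]

/-- Word length of `g` with respect to the (symmetrised) alphabet `S`. -/
noncomputable def wordLength (S : Set G) (g : G) : ℕ :=
  sInf {n : ℕ | ∃ l : List G, l.length = n ∧ (∀ x ∈ l, x ∈ S ∨ x⁻¹ ∈ S) ∧ l.prod = g}

/-- Word metric on `G` with respect to `S`; this is the distance between vertices in the
Cayley graph `Cay(G, S)`. -/
noncomputable def wdist (S : Set G) (g h : G) : ℝ := wordLength S (g⁻¹ * h)

/-- A Morse geodesic ray in the Cayley graph of `(G, S)`, based at the identity,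
recorded by its sequence of vertices. -/
structure GRay (G : Type*) [Group G] (S : Set G) where
  seq : ℕ → G
  base : seq 0 = 1
  geod : IsGeodSeq (wdist S) seq
  morse : IsMorse (wdist S) (Set.range seq)

/-- Identification of rays at finite Hausdorff distance. -/
def grayRel (S : Set G) (x y : GRay G S) : Prop :=
  BddHD (wdist S) (Set.range x.seq) (Set.range y.seq)

/-- The Morse boundary `∂_M G` of the group `G` with finite generating set `S`. -/
def MorseBoundary (G : Type*) [Group G] (S : Set G) : Type _ := Quot (grayRel (G := G) S)

/-- The stratum of `N`-Morse rays. -/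
def NGRays (G : Type*) [Group G] (S : Set G) (N : ℝ → ℝ) : Type _ :=
  {γ : GRay G S // MorseSet (wdist S) N (Set.range γ.seq)}

/-- The compact-open topology on a stratum: for rays in a graph (vertex sequences) this is
the topology of pointwise convergence of the vertex sequences, `G` being discrete. -/
noncomputable instance NGRays.instTop (S : Set G) (N : ℝ → ℝ) :
    TopologicalSpace (NGRays G S N) :=
  TopologicalSpace.induced (fun γ => γ.1.seq)
    (@Pi.topologicalSpace ℕ (fun _ => G) (fun _ => ⊥))

/-- The direct limit topology on the Morse boundary of a group. -/
noncomputable instance MorseBoundary.instTop (S : Set G) :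
    TopologicalSpace (MorseBoundary G S) :=
  ⨆ N : ℝ → ℝ,
    TopologicalSpace.coinduced (fun γ : NGRays G S N => Quot.mk (grayRel S) γ.1) inferInstance

/-! ## Subgroups: undistortion, relative Morse boundaries -/

/-- `H` is finitely generated and undistorted in `(G, S)`: it has a finite generating set
whose word metric is bi-Lipschitz equivalent (suitably, quasi-isometric) to the metric
induced from `G`. -/
def FGUndistorted (S : Set G) (H : Subgroup G) : Prop :=
  ∃ T : Finset H, Subgroup.closure (T : Set H) = ⊤ ∧
    ∃ C : ℝ, 1 ≤ C ∧ ∀ h h' : H,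
      wdist (T : Set H) h h' ≤ C * wdist S (h : G) (h' : G) + C ∧
      wdist S (h : G) (h' : G) ≤ C * wdist (T : Set H) h h' + C

/-- The relative Morse boundary of `H` in `G` is empty, `(∂_M H, G) = ∅`:
no Morse geodesic ray of `H` (w.r.t. any finite generating set of `H`) remains Morse in `G`. -/
def RelMorseEmpty (S : Set G) (H : Subgroup G) : Prop :=
  ∀ T : Finset H, Subgroup.closure (T : Set H) = ⊤ →
    ∀ γ : ℕ → H, IsGeodSeq (wdist (T : Set H)) γ →
      IsMorse (wdist (T : Set H)) (Set.range γ) →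
      ¬ IsMorse (wdist S) (Set.range fun n => (γ n : G))

/-- The image of the natural injection `(∂_M H, G) ↪ ∂_M G`: those classes in `∂_M G`
having a representative ray staying at bounded distance from `H`. -/
def relBdryImage (S : Set G) (H : Subgroup G) : Set (MorseBoundary G S) :=
  {ξ | ∃ γ : GRay G S, Quot.mk (grayRel S) γ = ξ ∧
        ∃ r : ℝ, ∀ n : ℕ, ∃ h ∈ H, wdist S (γ.seq n) h ≤ r}

/-- The relative Morse boundary `(∂_M H, G)` as a subset of `∂_M H` (where `∂_M H` is
formed w.r.t. a generating set `T` of `H`): classes of rays that remain Morse in `G`. -/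
def relBdryIn (S : Set G) (H : Subgroup G) (T : Set H) : Set (MorseBoundary H T) :=
  {ξ | ∃ γ : GRay H T, Quot.mk (grayRel T) γ = ξ ∧
        IsMorse (wdist S) (Set.range fun n => (γ.seq n : G))}

/-- Specification of the natural map `∂_M H → ∂_M G` (or of its restriction to the relative
boundary): each class is sent to the class of a ray of `G` at finite Hausdorff distance
from the image of (a representative of) the given class. -/
def InclSpec (S : Set G) (H : Subgroup G) (TH : Set H)
    (F : MorseBoundary H TH → MorseBoundary G S) : Prop :=
  ∀ γ : GRay H TH, ∀ β : GRay G S,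
    Quot.mk (grayRel S) β = F (Quot.mk (grayRel TH) γ) →
    BddHD (wdist S) (Set.range fun n => ((γ.seq n : G))) (Set.range β.seq)

/-! ## Asymptotic cones and relatively wide subgroups -/

/-- Admissible sequences for an asymptotic cone: sequences at bounded rescaled distance
from the basepoints `o`. -/
def conePts (ω : Ultrafilter ℕ) (d : X → X → ℝ) (o : ℕ → X) (s : ℕ → ℝ) : Set (ℕ → X) :=
  {x | ∃ B : ℝ, ∀ᶠ n in (ω : Filter ℕ), d (o n) (x n) ≤ B * s n}

/-- The pseudo-distance of the asymptotic cone: ultralimit of the rescaled distances. -/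
noncomputable def coneDist (ω : Ultrafilter ℕ) (d : X → X → ℝ) (s : ℕ → ℝ)
    (x y : ℕ → X) : ℝ :=
  limUnder (ω : Filter ℕ) (fun n => d (x n) (y n) / s n)

/-- The topology of the asymptotic cone, as a topology on representative sequences:
generated by the open balls of the cone pseudo-distance. -/
noncomputable def coneTop (ω : Ultrafilter ℕ) (d : X → X → ℝ) (o : ℕ → X) (s : ℕ → ℝ) :
    TopologicalSpace (ℕ → X) :=
  TopologicalSpace.generateFrom
    {U | ∃ c ∈ conePts ω d o s, ∃ ε : ℝ, 0 < ε ∧ U = {x | coneDist ω d s c x < ε}}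

/-- `z` is a cut point of the asymptotic cone separating the points `x` and `y`:
`x, y` differ from `z` and do not lie in a common connected subset of the complement
of (the point represented by) `z`. -/
def ConeSeparates (ω : Ultrafilter ℕ) (d : X → X → ℝ) (o : ℕ → X) (s : ℕ → ℝ)
    (x y z : ℕ → X) : Prop :=
  coneDist ω d s x z ≠ 0 ∧ coneDist ω d s y z ≠ 0 ∧
  ¬ ∃ A : Set (ℕ → X),
      A ⊆ {w ∈ conePts ω d o s | coneDist ω d s w z ≠ 0} ∧ x ∈ A ∧ y ∈ A ∧
      @IsPreconnected (ℕ → X) (coneTop ω d o s) A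

/-- `H` is relatively wide in `(G, S)`: in every asymptotic cone of `G` (over a
non-principal ultrafilter, arbitrary basepoints and scaling factors tending to infinity),
no two limit points of `H` are separated by a cut point. -/
def RelativelyWide (S : Set G) (H : Subgroup G) : Prop :=
  ∀ ω : Ultrafilter ℕ, (ω : Filter ℕ) ≤ Filter.cofinite →
  ∀ (o : ℕ → G) (s : ℕ → ℝ), (∀ n, 0 < s n) → Tendsto s atTop atTop →
  ∀ x y z : ℕ → G, (∀ n, x n ∈ H) → (∀ n, y n ∈ H) →
    x ∈ conePts ω (wdist S) o s → y ∈ conePts ω (wdist S) o s →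
    z ∈ conePts ω (wdist S) o s →
    ¬ ConeSeparates ω (wdist S) o s x y z

/-- The subgroup `H ≤ V` is relatively wide in `V` (for any, equivalently some, finite
generating set of `V`). -/
def RelWideIn (V H : Subgroup G) : Prop :=
  ∀ SV : Finset V, Subgroup.closure (SV : Set V) = ⊤ →
    RelativelyWide (SV : Set V) (H.subgroupOf V)

/-! ## Actions on simplicial trees -/

variable {VT : Type*}

/-- `G` splits as a graph of groups: it acts on the simplicial tree `T`
(preserving adjacency), minimally, non-elliptically and without inversions. -/
def ActsOnTree (G : Type*) [Group G] {VT : Type*} (T : SimpleGraph VT) [MulAction G VT] :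
    Prop :=
  T.IsTree ∧
  (∀ (g : G) (a b : VT), T.Adj a b → T.Adj (g • a) (g • b)) ∧
  (∀ (g : G) (a b : VT), T.Adj a b → ¬(g • a = b ∧ g • b = a)) ∧
  (¬ ∃ v : VT, ∀ g : G, g • v = v) ∧
  (∀ W : Set VT, W.Nonempty → (∀ (g : G), ∀ v ∈ W, g • v ∈ W) →
    (∀ a ∈ W, ∀ b ∈ W, ∀ c : VT, T.dist a c + T.dist c b = T.dist a b → c ∈ W) →
    W = Set.univ)

/-- The stabiliser of the edge `{a, b}` (pointwise; for actions without inversions this is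
the full edge stabiliser). -/
def edgeStab (G : Type*) [Group G] {VT : Type*} [MulAction G VT] (a b : VT) : Subgroup G :=
  MulAction.stabilizer G a ⊓ MulAction.stabilizer G b

/-- The halfspace determined by the edge `{a, b}` containing `b`: one of the two connected
components of the complement of the open edge. -/
def halfspace {VT : Type*} (T : SimpleGraph VT) (a b : VT) : Set VT :=
  {v | T.dist v b < T.dist v a}

end MorseGoG

namespace MorseGoG

variable {G : Type*} [Group G] {VT : Type*}

/-- A choice of "edge subgraphs" `Γ(𝔢) ⊆ Γ` of the Cayley graph `Γ = Cay(G, S)`, one for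
each (unoriented) edge of the tree `T`, recorded by its vertex set `A a b ⊆ G`,
satisfying the properties of Lemma 3.2 (`AIS lem`).  Here `p` is the fixed base vertex of
`T` and `f_p(g) = g • p` is the orbit map. -/
structure EdgeSubgraphs (G : Type*) [Group G] (S : Set G) {VT : Type*} (T : SimpleGraph VT)
    [MulAction G VT] (p : VT) where
  /-- the vertex set of `Γ(𝔢)` for the edge `𝔢 = {a, b}` -/
  A : VT → VT → Set G
  /-- `Γ(𝔢)` only depends on the unoriented edge -/
  symm : ∀ a b : VT, A a b = A b a
  /-- (1) `Γ(𝔢)` is connected -/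
  conn : ∀ a b : VT, T.Adj a b → ∀ x ∈ A a b, ∀ y ∈ A a b,
    ∃ (n : ℕ) (c : ℕ → G), IsEdgePath (wdist S) n c ∧ c 0 = x ∧ c n = y ∧
      ∀ i ≤ n, c i ∈ A a b
  /-- (1) `Γ(𝔢)` is `G_𝔢`-invariant -/
  inva : ∀ a b : VT, T.Adj a b → ∀ g ∈ edgeStab G a b, ∀ x ∈ A a b, g * x ∈ A a b
  /-- (1) `Γ(𝔢)` is `G_𝔢`-cocompact -/
  cocpt : ∀ a b : VT, T.Adj a b →
    ∃ F : Finset G, ∀ x ∈ A a b, ∃ g ∈ edgeStab G a b, ∃ f ∈ F, x = g * f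
  /-- (2) equivariance: `Γ(g𝔢) = gΓ(𝔢)` -/
  equivariant : ∀ (g : G) (a b : VT), A (g • a) (g • b) = (fun x => g * x) '' A a b
  /-- (3) `Γ(𝔢)` contains every edge of `Γ` with one endpoint in `f_p⁻¹(𝔥)` and the other
  in `f_p⁻¹(𝔥*)` -/
  crossing : ∀ a b : VT, T.Adj a b → ∀ x y : G, wdist S x y = 1 →
    x • p ∈ halfspace T a b → y • p ∈ halfspace T b a → x ∈ A a b ∧ y ∈ A a b
  /-- (4) `N(f_p⁻¹(𝔥), r) ∩ N(f_p⁻¹(𝔥*), r) ⊆ N(Γ(𝔢), r)` -/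
  nbhd : ∀ a b : VT, T.Adj a b → ∀ r : ℝ, 0 ≤ r → ∀ x : G,
    (∃ y : G, y • p ∈ halfspace T a b ∧ wdist S x y ≤ r) →
    (∃ y : G, y • p ∈ halfspace T b a ∧ wdist S x y ≤ r) →
    ∃ z ∈ A a b, wdist S x z ≤ r
  /-- (5) each edge of `Γ` lies in `Γ(𝔢)` for only finitely many edges `𝔢` of `T` -/
  finmany : ∀ x y : G, wdist S x y = 1 →
    {e : VT × VT | T.Adj e.1 e.2 ∧ x ∈ A e.1 e.2 ∧ y ∈ A e.1 e.2}.Finite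

/-- The vertex set of `Γ(𝔥)` for the halfspace `𝔥` of the edge `{a,b}` containing `b`:
`f_p⁻¹(𝔥) ∖ Γ(𝔢)`. -/
def hsVerts (T : SimpleGraph VT) [MulAction G VT] (p : VT)
    (A : VT → VT → Set G) (a b : VT) : Set G :=
  {g : G | g • p ∈ halfspace T a b ∧ g ∉ A a b}

/-- `M(𝔥) ⊆ ∂_M G`: classes of rays eventually contained in `Γ(𝔥)`, for the halfspace `𝔥`
of the edge `{a,b}` containing `b`. -/
def Mset (S : Set G) (T : SimpleGraph VT) [MulAction G VT] (p : VT)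
    (A : VT → VT → Set G) (a b : VT) : Set (MorseBoundary G S) :=
  {ξ | ∃ γ : GRay G S, Quot.mk (grayRel S) γ = ξ ∧
        ∃ n₀ : ℕ, ∀ n ≥ n₀, γ.seq n ∈ hsVerts T p A a b}

end MorseGoG

namespace MorseGoG

/-! ### Halfspaces in trees -/

section Tree

variable {VT : Type*} {T : SimpleGraph VT}

lemma tree_adj_dist (hT : T.IsTree) (u : VT) {v w : VT} (h : T.Adj v w) :
    T.dist u v = T.dist u w + 1 ∨ T.dist u w = T.dist u v + 1 := by
  have := hT.dist_eq_dist_add_one_of_adj u h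
  omega

/-- In a tree, a vertex `b ≠ v` has only one neighbour closer to `v`. -/
lemma closer_unique (hT : T.IsTree) {v a b c : VT} (hab : T.Adj a b) (hcb : T.Adj c b)
    (ha : T.dist v a < T.dist v b) (hc : T.dist v c < T.dist v b) : a = c := by
  classical
  obtain ⟨q, hq, hql⟩ := hT.connected.exists_path_of_dist v b
  have key : ∀ x, T.Adj x b → T.dist v x < T.dist v b → x = q.penultimate := by
    intro x hx hxd
    obtain ⟨r, hr, hrl⟩ := hT.connected.exists_path_of_dist v x
    have hb : b ∉ r.support := by
      intro hb
      have := T.dist_le (r.takeUntil b hb)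
      have := r.length_takeUntil_le_length hb
      omega
    have h1 : (r.concat hx).IsPath := hr.concat hb hx
    have h2 := hT.isAcyclic.path_unique ⟨q, hq⟩ ⟨_, h1⟩
    have h3 : q = r.concat hx := congrArg Subtype.val h2
    rw [h3]; simp
  rw [key a hab ha, key c hcb hc]

lemma mem_halfspace_or (hT : T.IsTree) {a b : VT} (h : T.Adj a b) (v : VT) :
    v ∈ halfspace T a b ∨ v ∈ halfspace T b a := by
  simp only [halfspace, mem_setOf_eq]
  have := tree_adj_dist hT v h
  omega

lemma not_mem_halfspace {a b : VT} {v : VT} (h : v ∈ halfspace T a b) :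
    v ∉ halfspace T b a := by
  simp only [halfspace, mem_setOf_eq] at *
  omega

lemma mem_halfspace_of_not (hT : T.IsTree) {a b : VT} (h : T.Adj a b) {v : VT}
    (hv : v ∉ halfspace T a b) : v ∈ halfspace T b a :=
  (mem_halfspace_or hT h v).resolve_left hv

/-- The only edge separating two adjacent vertices is the edge joining them. -/
lemma sep_of_adj (hT : T.IsTree) {a b u w : VT} (hab : T.Adj a b) (huw : T.Adj u w)
    (hu : u ∈ halfspace T a b) (hw : w ∈ halfspace T b a) : (a, b) = (w, u) := by
  simp only [halfspace, mem_setOf_eq] at hu hw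
  have e1 := tree_adj_dist hT u hab
  have e2 := tree_adj_dist hT w hab
  have e3 := tree_adj_dist hT a huw
  have e4 := tree_adj_dist hT b huw
  simp only [T.dist_comm (u := a), T.dist_comm (u := b)] at e3 e4
  by_cases hk : u = b
  · subst hk
    have : T.dist w a = 0 := by
      have : T.dist u u = 0 := T.dist_self
      omega
    have : w = a := hT.connected.dist_eq_zero_iff.1 this
    subst this; rfl
  · exfalso
    obtain ⟨q, hq, hql⟩ := hT.connected.exists_path_of_dist u b
    cases q with
    | nil => exact hk rfl
    | @cons _ z _ hz q' =>
      simp only [SimpleGraph.Walk.length_cons] at hql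
      have hzb := T.dist_le q'
      have hza : T.dist z a ≤ T.dist z b + 1 := by
        have := tree_adj_dist hT z hab
        omega
      have : z = w := by
        apply closer_unique hT (v := a) (b := u) hz.symm huw.symm
        · rw [T.dist_comm (u := a), T.dist_comm (u := a)]; omega
        · rw [T.dist_comm (u := a), T.dist_comm (u := a)]; omega
      subst this
      omega

lemma finite_sep (hT : T.IsTree) (u w : VT) :
    {e : VT × VT | T.Adj e.1 e.2 ∧ u ∈ halfspace T e.1 e.2 ∧ w ∈ halfspace T e.2 e.1}.Finite := by
  obtain ⟨q⟩ := hT.connected u w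
  induction q with
  | nil =>
    convert Set.finite_empty
    ext e
    simp only [mem_setOf_eq, mem_empty_iff_false, iff_false]
    rintro ⟨_, h1, h2⟩
    exact not_mem_halfspace h1 h2
  | @cons u z w huz q ih =>
    refine (ih.union (Set.finite_singleton (z, u))).subset ?_
    rintro ⟨a, b⟩ ⟨hab, h1, h2⟩
    by_cases hz : z ∈ halfspace T a b
    · exact Or.inl ⟨hab, hz, h2⟩
    · exact Or.inr (sep_of_adj hT hab huz h1 (mem_halfspace_of_not hT hab hz))

lemma exists_halfspace_of_ne (hT : T.IsTree) {v x : VT} (h : v ≠ x) :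
    ∃ y, T.Adj x y ∧ v ∈ halfspace T x y := by
  obtain ⟨q, hq, hql⟩ := hT.connected.exists_path_of_dist x v
  cases q with
  | nil => exact absurd rfl h
  | @cons _ z _ hz q' =>
    refine ⟨z, hz, ?_⟩
    have := T.dist_le q'
    simp only [SimpleGraph.Walk.length_cons] at hql
    simp only [halfspace, mem_setOf_eq]
    rw [T.dist_comm (u := v), T.dist_comm (u := v)]; omega

/-- Geodesics in a tree continue geodesically unless they backtrack. -/
lemma halfspace_step (hT : T.IsTree) {v a b c : VT} (hab : T.Adj a b) (hbc : T.Adj b c)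
    (hne : a ≠ c) (hv : v ∈ halfspace T b a) : v ∈ halfspace T c b := by
  by_contra hcon
  have h2 := mem_halfspace_of_not hT hbc.symm hcon
  exact hne (closer_unique hT (v := v) hab hbc.symm hv h2)

lemma dist_smul {G : Type*} [Group G] [MulAction G VT] (hT : T.IsTree)
    (hadj : ∀ (g : G) (a b : VT), T.Adj a b → T.Adj (g • a) (g • b)) (g : G) (a b : VT) :
    T.dist (g • a) (g • b) = T.dist a b := by
  have key : ∀ (g : G) (a b : VT), T.dist (g • a) (g • b) ≤ T.dist a b := by
    intro g a b
    obtain ⟨q, hq⟩ := hT.connected.exists_walk_length_eq_dist a b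
    let φ : T →g T := ⟨fun v => g • v, fun h => hadj g _ _ h⟩
    have := T.dist_le (q.map φ)
    rw [SimpleGraph.Walk.length_map, hq] at this
    exact this
  refine le_antisymm (key g a b) ?_
  have := key g⁻¹ (g • a) (g • b)
  simpa using this

lemma smul_mem_halfspace {G : Type*} [Group G] [MulAction G VT] (hT : T.IsTree)
    (hadj : ∀ (g : G) (a b : VT), T.Adj a b → T.Adj (g • a) (g • b)) (g : G) (a b v : VT) :
    g • v ∈ halfspace T (g • a) (g • b) ↔ v ∈ halfspace T a b := by
  simp only [halfspace, mem_setOf_eq, dist_smul hT hadj]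

end Tree

/-! ### Word metrics -/

/-- `d` satisfies the axioms of a pseudometric. -/
structure PDist {X : Type*} (d : X → X → ℝ) : Prop where
  self : ∀ x, d x x = 0
  comm : ∀ x y, d x y = d y x
  tri : ∀ x y z, d x z ≤ d x y + d y z

section Word

variable {K : Type*} [Group K] {S : Set K}

lemma wl_exists (hS : Subgroup.closure S = ⊤) (g : K) :
    ∃ l : List K, l.length = wordLength S g ∧ (∀ x ∈ l, x ∈ S ∨ x⁻¹ ∈ S) ∧ l.prod = g := by
  have hne : {n : ℕ | ∃ l : List K, l.length = n ∧ (∀ x ∈ l, x ∈ S ∨ x⁻¹ ∈ S) ∧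
      l.prod = g}.Nonempty := by
    have hg : g ∈ Subgroup.closure S := by rw [hS]; trivial
    rw [← Subgroup.mem_toSubmonoid, Subgroup.closure_toSubmonoid] at hg
    obtain ⟨l, hl, hp⟩ := Submonoid.exists_list_of_mem_closure hg
    exact ⟨l.length, l, rfl, hl, hp⟩
  exact Nat.sInf_mem hne

lemma wl_le (l : List K) (hl : ∀ x ∈ l, x ∈ S ∨ x⁻¹ ∈ S) : wordLength S l.prod ≤ l.length :=
  Nat.sInf_le ⟨l, rfl, hl, rfl⟩

lemma wl_one : wordLength S (1 : K) = 0 := by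
  have := wl_le (S := S) ([] : List K) (by simp)
  simpa using this

lemma wl_mul (hS : Subgroup.closure S = ⊤) (g h : K) :
    wordLength S (g * h) ≤ wordLength S g + wordLength S h := by
  obtain ⟨l, hl, hl', rfl⟩ := wl_exists hS g
  obtain ⟨m, hm, hm', rfl⟩ := wl_exists hS h
  rw [← hl, ← hm, ← List.prod_append, ← List.length_append]
  apply wl_le
  intro x hx
  rcases List.mem_append.1 hx with h | h
  exacts [hl' x h, hm' x h]

lemma wl_inv_le (hS : Subgroup.closure S = ⊤) (g : K) :
    wordLength S g⁻¹ ≤ wordLength S g := by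
  obtain ⟨l, hl, hl', rfl⟩ := wl_exists hS g
  rw [← hl, List.prod_inv_reverse]
  refine (wl_le _ ?_).trans (by simp)
  intro x hx
  simp only [List.mem_reverse, List.mem_map] at hx
  obtain ⟨y, hy, rfl⟩ := hx
  rw [inv_inv]
  exact (hl' y hy).symm

lemma wl_inv (hS : Subgroup.closure S = ⊤) (g : K) :
    wordLength S g⁻¹ = wordLength S g := by
  apply le_antisymm (wl_inv_le hS g)
  have := wl_inv_le hS g⁻¹
  rwa [inv_inv] at this

lemma wdist_pdist (hS : Subgroup.closure S = ⊤) : PDist (wdist S) where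
  self x := by simp [wdist, wl_one]
  comm x y := by
    unfold wdist
    rw [← wl_inv hS, mul_inv_rev, inv_inv]
  tri x y z := by
    unfold wdist
    have := wl_mul hS (x⁻¹ * y) (y⁻¹ * z)
    rw [show x⁻¹ * y * (y⁻¹ * z) = x⁻¹ * z by group] at this
    exact_mod_cast this

lemma wdist_mul_left (g x y : K) : wdist S (g * x) (g * y) = wdist S x y := by
  unfold wdist
  rw [show (g * x)⁻¹ * (g * y) = x⁻¹ * y by group]

lemma wdist_one_left (g : K) : wdist S 1 g = wordLength S g := by simp [wdist]

lemma letter_of_wdist_one (hS : Subgroup.closure S = ⊤) {g h : K} (H : wdist S g h = 1) :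
    g⁻¹ * h ∈ S ∨ (g⁻¹ * h)⁻¹ ∈ S := by
  unfold wdist at H
  obtain ⟨l, hl, hl', hp⟩ := wl_exists hS (g⁻¹ * h)
  have h0 : l.length = 1 := by rw [hl]; exact_mod_cast H
  obtain ⟨s, rfl⟩ := List.length_eq_one_iff.1 h0
  simp only [List.prod_singleton] at hp
  rw [← hp]
  exact hl' s (by simp)

lemma finite_ball (hS : Subgroup.closure S = ⊤) (hfin : S.Finite) (n : ℕ) :
    {g : K | wordLength S g ≤ n}.Finite := by
  have key : ∀ m : ℕ, {g : K | ∃ l : List K, l.length = m ∧ (∀ x ∈ l, x ∈ S ∨ x⁻¹ ∈ S) ∧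
      l.prod = g}.Finite := by
    intro m
    induction m with
    | zero =>
      refine (Set.finite_singleton (1 : K)).subset ?_
      rintro g ⟨l, hl, -, rfl⟩
      have : l = [] := List.length_eq_zero_iff.1 hl
      subst this; simp
    | succ m ih =>
      refine (((hfin.union hfin.inv).image2 (· * ·) ih)).subset ?_
      rintro g ⟨l, hl, hl', rfl⟩
      cases l with
      | nil => simp at hl
      | cons x l =>
        refine ⟨x, hl' x (by simp), l.prod, ⟨l, by simpa using hl, ?_, rfl⟩, by simp⟩
        intro y hy
        exact hl' y (by simp [hy])
  refine ((Set.finite_Iic n).biUnion (fun m _ => key m)).subset ?_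
  intro g hg
  simp only [mem_iUnion]
  exact ⟨wordLength S g, hg, wl_exists hS g⟩

/-- A shortest word for `g` traces out a discrete geodesic from `1` to `g`. -/
lemma exists_geodSeg (hS : Subgroup.closure S = ⊤) (g : K) :
    ∃ σ : ℕ → K, σ 0 = 1 ∧ σ (wordLength S g) = g ∧
      IsGeodSeg (wdist S) (wordLength S g) σ := by
  obtain ⟨l, hl, hl', hp⟩ := wl_exists hS g
  have hd := wdist_pdist hS
  have hup : ∀ i j, i ≤ j → wdist S (l.take i).prod (l.take j).prod ≤ (j : ℝ) - i := by
    intro i j hij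
    have h1 : (l.take i).prod⁻¹ * (l.take j).prod = ((l.drop i).take (j - i)).prod := by
      obtain ⟨k, rfl⟩ := Nat.exists_eq_add_of_le hij
      rw [List.take_add, List.prod_append]
      simp
    unfold wdist
    rw [h1]
    have h2 := wl_le (S := S) ((l.drop i).take (j - i))
      (fun x hx => hl' x (List.mem_of_mem_drop (List.mem_of_mem_take hx)))
    have h3 : wordLength S ((l.drop i).take (j - i)).prod ≤ j - i :=
      h2.trans (List.length_take_le _ _)
    have : (wordLength S ((l.drop i).take (j - i)).prod : ℝ) ≤ ((j - i : ℕ) : ℝ) := by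
      exact_mod_cast h3
    rwa [Nat.cast_sub hij] at this
  have h0 : (l.take 0).prod = 1 := by simp
  have hn : (l.take (wordLength S g)).prod = g := by rw [← hl, List.take_length, hp]
  have hle : ∀ i j, i ≤ j → j ≤ wordLength S g →
      wdist S (l.take i).prod (l.take j).prod = (j : ℝ) - i := by
    intro i j hij hj
    apply le_antisymm (hup i j hij)
    have a1 := hup 0 i (Nat.zero_le _)
    have a2 := hup j _ hj
    have a3 := hd.tri (l.take 0).prod (l.take i).prod (l.take (wordLength S g)).prod
    have a4 := hd.tri (l.take i).prod (l.take j).prod (l.take (wordLength S g)).prod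
    have a5 : wdist S (l.take 0).prod (l.take (wordLength S g)).prod = wordLength S g := by
      rw [h0, hn, wdist_one_left]
    push_cast at a1
    linarith
  refine ⟨fun i => (l.take i).prod, h0, hn, ?_⟩
  intro i hi j hj
  rcases le_total i j with h | h
  · have : (i : ℝ) ≤ j := by exact_mod_cast h
    rw [hle i j h hj, abs_sub_comm, abs_of_nonneg (by linarith)]
  · have : (j : ℝ) ≤ i := by exact_mod_cast h
    rw [hd.comm, hle j i h hi, abs_of_nonneg (by linarith)]

lemma IsQG.mul_left {C : ℝ} {I : Set ℝ} {α : ℝ → K} (h : IsQG (wdist S) C I α) (g : K) :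
    IsQG (wdist S) C I (fun t => g * α t) := by
  refine ⟨h.1, fun s hs t ht => ?_⟩
  rw [wdist_mul_left]
  exact h.2 s hs t ht

lemma InNbhd.mul_left {A : Set K} {r : ℝ} {x : K} (h : InNbhd (wdist S) A r x) (g : K) :
    InNbhd (wdist S) ((fun y => g * y) '' A) r (g * x) := by
  obtain ⟨a, ha, hd⟩ := h
  exact ⟨g * a, ⟨a, ha, rfl⟩, by rwa [wdist_mul_left]⟩

lemma MorseSet.mul_left {N : ℝ → ℝ} {A : Set K} (h : MorseSet (wdist S) N A) (g : K) :
    MorseSet (wdist S) N ((fun y => g * y) '' A) := by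
  intro C hC a b hab α hα ha hb t ht
  obtain ⟨x, hx, hxa⟩ := ha
  obtain ⟨y, hy, hyb⟩ := hb
  have h1 := h C hC a b hab _ (hα.mul_left g⁻¹)
    (by simp only at hxa; rw [← hxa]; simpa using hx)
    (by simp only at hyb; rw [← hyb]; simpa using hy) t ht
  have h2 := h1.mul_left g
  simpa using h2

end Word

/-! ### Coarse geometry of Morse sets -/

section Coarse

variable {X : Type*} {d : X → X → ℝ}

lemma InNbhd.mono {A : Set X} {r r' : ℝ} {x : X} (h : InNbhd d A r x) (hr : r ≤ r') :
    InNbhd d A r' x := by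
  obtain ⟨a, ha, hd⟩ := h
  exact ⟨a, ha, hd.trans hr⟩

lemma InNbhd.subset {A B : Set X} {r : ℝ} {x : X} (h : InNbhd d A r x) (hAB : A ⊆ B) :
    InNbhd d B r x := by
  obtain ⟨a, ha, hd⟩ := h
  exact ⟨a, hAB ha, hd⟩

lemma qg_div_mono {x C C' : ℝ} (hx : 0 ≤ x) (hC : 1 ≤ C) (h : C ≤ C') : x / C' ≤ x / C :=
  div_le_div_of_nonneg_left hx (by linarith) h

lemma IsQG.mono {C C' : ℝ} {I : Set ℝ} {α : ℝ → X} (h : IsQG d C I α) (hC : C ≤ C') :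
    IsQG d C' I α := by
  have h1 := h.1
  refine ⟨h1.trans hC, fun s hs t ht => ?_⟩
  obtain ⟨h2, h3⟩ := h.2 s hs t ht
  have h4 := qg_div_mono (abs_nonneg (s - t)) h1 hC
  have h5 := mul_le_mul_of_nonneg_right hC (abs_nonneg (s - t))
  constructor <;> linarith

/-- Quasi-geodesics need not be continuous, so moving the two endpoints of one by at most `r`
gives a quasi-geodesic again.  Hence the Morse property also controls quasi-geodesics whose
endpoints are only close to the Morse set. -/
lemma MorseSet.near (hd : PDist d) {N : ℝ → ℝ} {A : Set X} (hA : MorseSet d N A)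
    {C r a b : ℝ} (hr : 0 ≤ r) {α : ℝ → X} (hα : IsQG d C (Icc a b) α)
    (ha : InNbhd d A r (α a)) (hb : InNbhd d A r (α b)) {t : ℝ} (ht : t ∈ Icc a b) :
    InNbhd d A (max r (N (C + 2 * r))) (α t) := by
  classical
  by_cases hta : t = a
  · rw [hta]; exact ha.mono (le_max_left _ _)
  by_cases htb : t = b
  · rw [htb]; exact hb.mono (le_max_left _ _)
  obtain ⟨u, hu, hau⟩ := ha
  obtain ⟨v, hv, hbv⟩ := hb
  have hab : a < b := lt_of_lt_of_le (lt_of_le_of_ne ht.1 (Ne.symm hta)) ht.2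
  have hC := hα.1
  set β : ℝ → X := fun s => if s = a then u else if s = b then v else α s with hβ
  have hclose : ∀ s, d (α s) (β s) ≤ r := by
    intro s
    simp only [hβ]
    split_ifs with h1 h2
    · rw [h1]; exact hau
    · rw [h2]; exact hbv
    · rw [hd.self]; exact hr
  have hβqg : IsQG d (C + 2 * r) (Icc a b) β := by
    refine ⟨by linarith, fun s hs s' hs' => ?_⟩
    obtain ⟨h2, h3⟩ := hα.2 s hs s' hs'
    have h4 := qg_div_mono (abs_nonneg (s - s')) hC (show C ≤ C + 2 * r by linarith)
    have h5 := mul_le_mul_of_nonneg_right (show C ≤ C + 2 * r by linarith) (abs_nonneg (s - s'))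
    have k1 := hclose s
    have k2 := hclose s'
    have t1 := hd.tri (α s) (β s) (α s')
    have t2 := hd.tri (β s) (β s') (α s')
    have t3 := hd.tri (β s) (α s) (β s')
    have t4 := hd.tri (α s) (α s') (β s')
    have c1 := hd.comm (α s) (β s)
    have c2 := hd.comm (α s') (β s')
    constructor <;> linarith
  have hβt : β t = α t := by simp [hβ, hta, htb]
  have := hA (C + 2 * r) (by linarith) a b hab.le β hβqg (by simp [hβ, hu])
    (by simp [hβ, hab.ne', hv]) t ht
  rw [hβt] at this
  exact this.mono (le_max_right _ _)

/-- Coarse intermediate value theorem. -/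
lemma coarse_ivt {f : ℝ → ℝ} {a b J l : ℝ} (hab : a ≤ b) (hJ : 0 ≤ J)
    (hf : ∀ s ∈ Icc a b, ∀ t ∈ Icc a b, |s - t| ≤ 1 → |f s - f t| ≤ J)
    (ha : l - J ≤ f a) (hb : f b ≤ l + J) : ∃ s ∈ Icc a b, |f s - l| ≤ J := by
  by_cases ha' : f a ≤ l
  · exact ⟨a, ⟨le_rfl, hab⟩, by rw [abs_le]; constructor <;> linarith⟩
  push Not at ha'
  by_cases hbl : l ≤ f b
  · exact ⟨b, ⟨hab, le_rfl⟩, by rw [abs_le]; constructor <;> linarith⟩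
  push Not at hbl
  -- the last time (up to an error of `1/2`) at which `f` is at least `l`
  set Z : Set ℝ := {s | s ∈ Icc a b ∧ l ≤ f s} with hZ
  have hne : Z.Nonempty := ⟨a, ⟨le_rfl, hab⟩, ha'.le⟩
  have hbdd : BddAbove Z := ⟨b, fun s hs => hs.1.2⟩
  obtain ⟨s, hs, hlt⟩ := exists_lt_of_lt_csSup hne (show sSup Z - 1 / 2 < sSup Z by linarith)
  refine ⟨s, hs.1, ?_⟩
  set s' := min b (s + 1 / 2) with hs'
  have hss' : s ≤ s' := le_min hs.1.2 (by linarith)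
  have hs'b : s' ≤ b := min_le_left _ _
  have hs'u : s' ≤ s + 1 / 2 := min_le_right _ _
  have hlow : f s' < l := by
    rcases min_choice b (s + 1 / 2) with h | h
    · rw [hs', h]; exact hbl
    · by_contra hcon
      push Not at hcon
      have : s' ∈ Z := ⟨⟨hs.1.1.trans hss', hs'b⟩, hcon⟩
      have := le_csSup hbdd this
      rw [hs', h] at this
      linarith
  have := hf s hs.1 s' ⟨hs.1.1.trans hss', hs'b⟩ (by rw [abs_le]; constructor <;> linarith)
  have h1 := hs.2
  rw [abs_le] at this ⊢
  constructor <;> linarith [this.1, this.2]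

/-- If a quasi-geodesic is tracked up to error `ρ` by a real coordinate `f`, then an excursion of
`f` below the level `l` between two times at which `f` is essentially above `l` is short, so the
excursion stays close to a point at which `f` is essentially `l`. -/
lemma excursion {C ρ a b l : ℝ} {α : ℝ → X} {f : ℝ → ℝ}
    (hα : IsQG d C (Icc a b) α) (hρ : 0 ≤ ρ)
    (h1 : ∀ s ∈ Icc a b, ∀ t ∈ Icc a b, |f s - f t| ≤ d (α s) (α t) + 2 * ρ)
    (h2 : ∀ s ∈ Icc a b, ∀ t ∈ Icc a b, d (α s) (α t) ≤ |f s - f t| + 2 * ρ)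
    (ha : l - ρ ≤ f a) (hb : l - ρ ≤ f b) {t : ℝ} (ht : t ∈ Icc a b) (hft : f t ≤ l) :
    ∃ s ∈ Icc a b, |f s - l| ≤ 2 * C + 2 * ρ ∧
      d (α t) (α s) ≤ C * (C * (4 * C + 6 * ρ + C)) + C := by
  have hC := hα.1
  set J := 2 * C + 2 * ρ with hJ
  have hJ0 : 0 ≤ J := by rw [hJ]; linarith
  have hjump : ∀ s ∈ Icc a b, ∀ t ∈ Icc a b, |s - t| ≤ 1 → |f s - f t| ≤ J := by
    intro s hs t ht hst
    have k1 := h1 s hs t ht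
    have k2 := (hα.2 s hs t ht).2
    have k3 : C * |s - t| ≤ C * 1 := mul_le_mul_of_nonneg_left hst (by linarith)
    rw [hJ]; linarith
  obtain ⟨s₁, hs₁, hfs₁⟩ := coarse_ivt (f := f) (l := l) ht.1 hJ0
    (fun s hs t' ht' => hjump s ⟨hs.1, hs.2.trans ht.2⟩ t' ⟨ht'.1, ht'.2.trans ht.2⟩)
    (by linarith) (by linarith)
  obtain ⟨s₂, hs₂, hfs₂⟩ := coarse_ivt (f := fun s => - f s) (l := -l) ht.2 hJ0
    (fun s hs t' ht' h => by
      have := hjump s ⟨ht.1.trans hs.1, hs.2⟩ t' ⟨ht.1.trans ht'.1, ht'.2⟩ h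
      rw [abs_sub_comm] at this
      rw [show - f s - - f t' = f t' - f s by ring]; exact this)
    (by linarith) (by linarith)
  have hfs₂' : |f s₂ - l| ≤ J := by
    rw [abs_sub_comm, show l - f s₂ = - f s₂ - -l by ring]; exact hfs₂
  have m1 : s₁ ∈ Icc a b := ⟨hs₁.1, hs₁.2.trans ht.2⟩
  have m2 : s₂ ∈ Icc a b := ⟨ht.1.trans hs₂.1, hs₂.2⟩
  refine ⟨s₁, m1, hfs₁, ?_⟩
  have e1 := h2 s₁ m1 s₂ m2
  have e2 : |f s₁ - f s₂| ≤ 2 * J := by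
    rw [abs_le] at hfs₁ hfs₂' ⊢
    constructor <;> linarith [hfs₁.1, hfs₁.2, hfs₂'.1, hfs₂'.2]
  have e3 := (hα.2 s₁ m1 s₂ m2).1
  have e4 : |s₁ - s₂| / C ≤ 4 * C + 6 * ρ + C := by rw [hJ] at e2; linarith
  have e5 : |s₁ - s₂| ≤ C * (4 * C + 6 * ρ + C) := by
    rw [div_le_iff₀ (by linarith)] at e4; linarith
  have e6 : |t - s₁| ≤ |s₁ - s₂| := by
    rw [abs_of_nonneg (by linarith [hs₁.2]), abs_sub_comm,
      abs_of_nonneg (by linarith [hs₁.2, hs₂.1])]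
    linarith [hs₂.1]
  have e7 := (hα.2 t ht s₁ m1).2
  have e8 : C * |t - s₁| ≤ C * (C * (4 * C + 6 * ρ + C)) :=
    mul_le_mul_of_nonneg_left (e6.trans e5) (by linarith)
  linarith

/-- Subsegments of an `N`-Morse geodesic are uniformly Morse. -/
lemma morse_subsegment (hd : PDist d) (N : ℝ → ℝ) :
    ∃ N' : ℝ → ℝ, ∀ γ : ℕ → X, IsGeodSeq d γ → MorseSet d N (range γ) →
      ∀ m n : ℕ, m ≤ n → MorseSet d N' (γ '' Icc m n) := by
  refine ⟨fun C => (C * (C * (4 * C + 6 * |N C| + C)) + C) + |N C| + (2 * C + 2 * |N C|), ?_⟩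
  intro γ hγ hM m n hmn C hC a b hab α hα hαa hαb t ht
  set ρ := |N C| with hρ
  have hρ0 : 0 ≤ ρ := abs_nonneg _
  have hex : ∀ s ∈ Icc a b, ∃ q : ℕ, d (α s) (γ q) ≤ ρ := by
    intro s hs
    obtain ⟨_, ⟨q, rfl⟩, hq⟩ := hM C hC a b hab α hα (image_subset_range _ _ hαa)
      (image_subset_range _ _ hαb) s hs
    exact ⟨q, hq.trans (le_abs_self _)⟩
  choose! q hq using hex
  have g1 : ∀ s ∈ Icc a b, ∀ t ∈ Icc a b,
      |(q s : ℝ) - q t| ≤ d (α s) (α t) + 2 * ρ := by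
    intro s hs t ht
    rw [← hγ]
    have := hd.tri (γ (q s)) (α s) (γ (q t))
    have := hd.tri (α s) (α t) (γ (q t))
    have := hq s hs
    have := hq t ht
    have := hd.comm (γ (q s)) (α s)
    linarith
  have g2 : ∀ s ∈ Icc a b, ∀ t ∈ Icc a b,
      d (α s) (α t) ≤ |(q s : ℝ) - q t| + 2 * ρ := by
    intro s hs t ht
    rw [← hγ]
    have := hd.tri (α s) (γ (q s)) (α t)
    have := hd.tri (γ (q s)) (γ (q t)) (α t)
    have := hq s hs
    have := hq t ht
    have := hd.comm (γ (q t)) (α t)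
    linarith
  have hend : ∀ s ∈ Icc a b, α s ∈ γ '' Icc m n → (m : ℝ) - ρ ≤ q s ∧ (q s : ℝ) ≤ n + ρ := by
    intro s hs hsi
    obtain ⟨i, hi, his⟩ := hsi
    have h1 := hq s hs
    rw [← his, hγ, abs_le] at h1
    have h2 : (m : ℝ) ≤ i := by exact_mod_cast hi.1
    have h3 : (i : ℝ) ≤ n := by exact_mod_cast hi.2
    constructor <;> linarith [h1.1, h1.2]
  have ha := hend a ⟨le_rfl, hab⟩ hαa
  have hb := hend b ⟨hab, le_rfl⟩ hαb
  have fin : ∀ k : ℕ, k ∈ Icc m n → (∃ s ∈ Icc a b, |(q s : ℝ) - k| ≤ 2 * C + 2 * ρ ∧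
      d (α t) (α s) ≤ C * (C * (4 * C + 6 * ρ + C)) + C) →
      InNbhd d (γ '' Icc m n)
        ((C * (C * (4 * C + 6 * ρ + C)) + C) + ρ + (2 * C + 2 * ρ)) (α t) := by
    rintro k hk ⟨s, hs, h1, h2⟩
    refine ⟨γ k, ⟨k, hk, rfl⟩, ?_⟩
    rw [← hγ] at h1
    have := hd.tri (α t) (α s) (γ k)
    have := hd.tri (α s) (γ (q s)) (γ k)
    have := hq s hs
    linarith
  by_cases hlow : q t < m
  · apply fin m ⟨le_rfl, hmn⟩
    exact excursion (f := fun s => (q s : ℝ)) hα hρ0 g1 g2 ha.1 hb.1 ht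
      (by exact_mod_cast hlow.le)
  by_cases hhigh : n < q t
  · apply fin n ⟨hmn, le_rfl⟩
    have hneg : ∀ x y : ℝ, |-x - -y| = |x - y| := by
      intro x y; rw [← abs_neg]; congr 1; ring
    obtain ⟨s, hs, h1, h2⟩ := excursion (f := fun s => -(q s : ℝ)) (l := -(n : ℝ)) hα hρ0
      (fun s hs t ht => by rw [hneg]; exact g1 s hs t ht)
      (fun s hs t ht => by rw [hneg]; exact g2 s hs t ht)
      (by linarith [ha.2]) (by linarith [hb.2]) ht
      (by have : (n : ℝ) < q t := by exact_mod_cast hhigh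
          linarith)
    rw [hneg] at h1
    exact ⟨s, hs, h1, h2⟩
  · push Not at hlow hhigh
    refine ⟨γ (q t), ⟨q t, ⟨hlow, hhigh⟩, rfl⟩, (hq t ht).trans ?_⟩
    have : 0 ≤ C * (C * (4 * C + 6 * ρ + C)) := by positivity
    linarith

lemma floor_diff {s t : ℝ} (hs : 0 ≤ s) (ht : 0 ≤ t) :
    |s - t| - 1 ≤ |(⌊s⌋₊ : ℝ) - ⌊t⌋₊| ∧ |(⌊s⌋₊ : ℝ) - ⌊t⌋₊| ≤ |s - t| + 1 := by
  have a1 := Nat.floor_le hs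
  have a2 := Nat.lt_floor_add_one s
  have b1 := Nat.floor_le ht
  have b2 := Nat.lt_floor_add_one t
  constructor
  · have : |s - t| ≤ |(⌊s⌋₊ : ℝ) - ⌊t⌋₊| + 1 := by
      rw [abs_le]
      constructor
      · linarith [neg_abs_le ((⌊s⌋₊ : ℝ) - ⌊t⌋₊)]
      · linarith [le_abs_self ((⌊s⌋₊ : ℝ) - ⌊t⌋₊)]
    linarith
  · rw [abs_le]
    constructor
    · linarith [neg_abs_le (s - t)]
    · linarith [le_abs_self (s - t)]

/-- A discrete quasi-geodesic segment gives a quasi-geodesic with real parameter. -/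
lemma isQG_floor {C : ℝ} (hC : 1 ≤ C) {L : ℕ} {c : ℕ → X}
    (hc : ∀ i ≤ L, ∀ j ≤ L, |(i : ℝ) - j| / C - C ≤ d (c i) (c j) ∧
      d (c i) (c j) ≤ C * |(i : ℝ) - j| + C) :
    IsQG d (2 * C) (Icc 0 (L : ℝ)) (fun t => c ⌊t⌋₊) := by
  refine ⟨by linarith, fun s hs t ht => ?_⟩
  have hfl : ∀ x : ℝ, x ∈ Icc 0 (L : ℝ) → ⌊x⌋₊ ≤ L := fun x hx =>
    Nat.floor_le_of_le hx.2
  obtain ⟨h1, h2⟩ := hc _ (hfl s hs) _ (hfl t ht)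
  obtain ⟨f1, f2⟩ := floor_diff hs.1 ht.1
  have hdiv : |s - t| / C - 1 / C ≤ |(⌊s⌋₊ : ℝ) - ⌊t⌋₊| / C := by
    rw [← sub_div]; exact div_le_div_of_nonneg_right f1 (by linarith)
  have h1C : 1 / C ≤ 1 := by rw [div_le_one (by linarith)]; exact hC
  have h4 := qg_div_mono (abs_nonneg (s - t)) hC (show C ≤ 2 * C by linarith)
  have h5 : C * |(⌊s⌋₊ : ℝ) - ⌊t⌋₊| ≤ C * (|s - t| + 1) :=
    mul_le_mul_of_nonneg_left f2 (by linarith)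
  have h6 := mul_nonneg (show 0 ≤ C by linarith) (abs_nonneg (s - t))
  constructor
  · linarith
  · simp only; nlinarith

/-- A discrete quasi-geodesic with endpoints near those of a Morse geodesic segment is uniformly
Hausdorff-close to the segment. -/
lemma fellow (hd : PDist d) (N : ℝ → ℝ) {C r : ℝ} (hC : 1 ≤ C) (hr : 0 ≤ r) :
    ∃ ρ : ℝ, 0 ≤ ρ ∧ ∀ (g : ℕ → X) (m n : ℕ) (c : ℕ → X) (L : ℕ), IsGeodSeq d g → m ≤ n →
      MorseSet d N (g '' Icc m n) →
      (∀ i ≤ L, ∀ j ≤ L, |(i : ℝ) - j| / C - C ≤ d (c i) (c j) ∧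
        d (c i) (c j) ≤ C * |(i : ℝ) - j| + C) →
      d (c 0) (g m) ≤ r → d (c L) (g n) ≤ r →
      (∀ i ≤ L, InNbhd d (g '' Icc m n) ρ (c i)) ∧
      (∀ q ∈ Icc m n, ∃ i ≤ L, d (g q) (c i) ≤ ρ) := by
  set R := max r (N (2 * C + 2 * r)) with hR
  have hR0 : r ≤ R := le_max_left _ _
  refine ⟨R + (2 * (2 * C) + 2 * R), by linarith, ?_⟩
  intro g m n c L hg hmn hM hc h0 hL
  have hqg := isQG_floor hC hc
  have hnear : ∀ t ∈ Icc (0 : ℝ) L, InNbhd d (g '' Icc m n) R (c ⌊t⌋₊) := by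
    intro t ht
    apply hM.near hd hr hqg _ _ ht
    · exact ⟨g m, ⟨m, ⟨le_rfl, hmn⟩, rfl⟩, by simpa using h0⟩
    · exact ⟨g n, ⟨n, ⟨hmn, le_rfl⟩, rfl⟩, by simpa using hL⟩
  constructor
  · intro i hi
    have := hnear i ⟨by positivity, by exact_mod_cast hi⟩
    rw [Nat.floor_natCast] at this
    exact this.mono (by linarith)
  · have hex : ∀ t ∈ Icc (0 : ℝ) L, ∃ q : ℕ, q ∈ Icc m n ∧ d (c ⌊t⌋₊) (g q) ≤ R := by
      intro t ht
      obtain ⟨_, ⟨q, hq, rfl⟩, h⟩ := hnear t ht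
      exact ⟨q, hq, h⟩
    choose! π hπ hπd using hex
    intro q hq
    have hL0 : (0 : ℝ) ≤ L := by positivity
    have e0 := hπd 0 ⟨le_rfl, hL0⟩
    have eL := hπd L ⟨hL0, le_rfl⟩
    have hq1 : (m : ℝ) ≤ q := by exact_mod_cast hq.1
    have hq2 : (q : ℝ) ≤ n := by exact_mod_cast hq.2
    obtain ⟨s, hs, hsq⟩ := coarse_ivt (f := fun t => -(π t : ℝ)) (l := -(q : ℝ))
      (J := 2 * (2 * C) + 2 * R) hL0 (by linarith)
      (by
        intro s hs t ht hst
        have k1 := (hqg.2 s hs t ht).2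
        have k2 : 2 * C * |s - t| ≤ 2 * C * 1 := mul_le_mul_of_nonneg_left hst (by linarith)
        have k3 := hπd s hs
        have k4 := hπd t ht
        have k5 := hd.tri (g (π s)) (c ⌊s⌋₊) (g (π t))
        have k6 := hd.tri (c ⌊s⌋₊) (c ⌊t⌋₊) (g (π t))
        have k7 := hd.comm (g (π s)) (c ⌊s⌋₊)
        have k8 := hg (π s) (π t)
        rw [abs_sub_comm] at k8
        rw [show -(π s : ℝ) - -(π t : ℝ) = π t - π s by ring, ← k8]
        linarith)
      (by
        have k1 := hd.tri (g (π 0)) (c 0) (g m)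
        rw [Nat.floor_zero] at e0
        rw [hd.comm (g (π 0)) (c 0), hg] at k1
        have := le_abs_self ((π 0 : ℝ) - m)
        linarith)
      (by
        have k1 := hd.tri (g n) (c L) (g (π L))
        rw [Nat.floor_natCast] at eL
        rw [hd.comm (g n) (c L), hg] at k1
        have := le_abs_self ((n : ℝ) - π L)
        linarith)
    refine ⟨⌊s⌋₊, Nat.floor_le_of_le hs.2, ?_⟩
    have k1 := hd.tri (g q) (g (π s)) (c ⌊s⌋₊)
    have k2 := hd.comm (g (π s)) (c ⌊s⌋₊)
    have k3 := hπd s hs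
    have k4 := hg q (π s)
    rw [show -(π s : ℝ) - -(q : ℝ) = q - π s by ring, ← k4] at hsq
    linarith

/-- A geodesic ray that returns to within `D` of a Morse set at arbitrarily late times and starts
on it stays within bounded distance of it. -/
lemma ray_near (hd : PDist d) {N : ℝ → ℝ} {A : Set X} (hA : MorseSet d N A) {γ : ℕ → X}
    (hγ : IsGeodSeq d γ) {D : ℝ} (hD : 0 ≤ D) (h0 : γ 0 ∈ A)
    (h : ∀ n : ℕ, ∃ t ≥ n, InNbhd d A D (γ t)) :
    ∃ r : ℝ, ∀ n, InNbhd d A r (γ n) := by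
  refine ⟨max D (N (2 * 1 + 2 * D)), fun n => ?_⟩
  obtain ⟨t, htn, ht⟩ := h n
  have hqg : IsQG d (2 * 1) (Icc 0 (t : ℝ)) (fun s => γ ⌊s⌋₊) := by
    apply isQG_floor le_rfl
    intro i _ j _
    rw [hγ]
    constructor <;> simp
  have := hA.near hd hD hqg ⟨γ 0, h0, by simpa [hd.self] using hD⟩ (by simpa using ht)
    (t := n) ⟨by positivity, by exact_mod_cast htn⟩
  simpa using this

end Coarse

/-! ### Morse geodesics near an edge group -/

section Edge

variable {G : Type*} [Group G]

lemma undist_lower {C x y : ℝ} (hC : 1 ≤ C) (h : x ≤ C * y + C) : x / C - C ≤ y := by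
  have : x / C ≤ y + 1 := by
    rw [div_le_iff₀ (by linarith)]; linarith
  linarith

/-- A geodesic of an undistorted subgroup is a discrete quasi-geodesic of the group. -/
lemma undist_geodSeg {S : Set G} {E : Subgroup G} {T : Set E} {C : ℝ} (hC : 1 ≤ C)
    (hund : ∀ h h' : E, wdist T h h' ≤ C * wdist S (h : G) (h' : G) + C ∧
      wdist S (h : G) (h' : G) ≤ C * wdist T h h' + C)
    {L : ℕ} {σ : ℕ → E} (hσ : IsGeodSeg (wdist T) L σ) :
    ∀ i ≤ L, ∀ j ≤ L, |(i : ℝ) - j| / C - C ≤ wdist S (σ i : G) (σ j) ∧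
        wdist S (σ i : G) (σ j) ≤ C * |(i : ℝ) - j| + C := by
  intro i hi j hj
  obtain ⟨h1, h2⟩ := hund (σ i) (σ j)
  rw [hσ i hi j hj] at h1 h2
  exact ⟨undist_lower hC h1, h2⟩

/-- If `E` is undistorted with empty relative Morse boundary, a sequence in `E` that is geodesic
for the word metric of `E` is not Morse in `G`: Morseness in `G` would pass to `E`. -/
lemma not_morse_of_relEmpty {S : Set G} {E : Subgroup G} {T : Finset E}
    (hT : Subgroup.closure (T : Set E) = ⊤) {C : ℝ} (hC : 1 ≤ C)
    (hund : ∀ h h' : E, wdist (T : Set E) h h' ≤ C * wdist S (h : G) (h' : G) + C ∧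
      wdist S (h : G) (h' : G) ≤ C * wdist (T : Set E) h h' + C)
    (hR : RelMorseEmpty S E) {c : ℕ → E} (hc : IsGeodSeq (wdist (T : Set E)) c) :
    ¬ IsMorse (wdist S) (range fun n => (c n : G)) := by
  intro hM
  refine hR T hT c hc ?_ hM
  obtain ⟨N, hN⟩ := hM
  refine ⟨fun K => C * N (C * K + C) + C, ?_⟩
  intro K hK a b hab α hα ha hb t ht
  have hCK : K ≤ C * K := by nlinarith
  have hqg : IsQG (wdist S) (C * K + C) (Icc a b) (fun s => (α s : G)) := by
    refine ⟨by nlinarith, fun s hs s' hs' => ?_⟩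
    obtain ⟨h1, h2⟩ := hund (α s) (α s')
    obtain ⟨h3, h4⟩ := hα.2 s hs s' hs'
    have habs := abs_nonneg (s - s')
    constructor
    · have e1 : |s - s'| ≤ K * (C * wdist S (α s : G) (α s') + C + K) := by
        have : |s - s'| / K ≤ C * wdist S (α s : G) (α s') + C + K := by linarith
        rwa [div_le_iff₀ (by linarith), mul_comm] at this
      have e2 : |s - s'| / (C * K) ≤ wdist S (α s : G) (α s') + 1 + K / C := by
        rw [div_le_iff₀ (by positivity)]
        have : (wdist S (α s : G) (α s') + 1 + K / C) * (C * K)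
            = K * (C * wdist S (α s : G) (α s') + C + K) := by field_simp
        rw [this]; exact e1
      have e3 : |s - s'| / (C * K + C) ≤ |s - s'| / (C * K) :=
        qg_div_mono habs (by linarith) (by linarith)
      have e4 : K / C ≤ K := div_le_self (by linarith) hC
      linarith
    · have : C * wdist (T : Set E) (α s) (α s') ≤ C * (K * |s - s'| + K) :=
        mul_le_mul_of_nonneg_left h4 (by linarith)
      nlinarith
  obtain ⟨_, ⟨i, rfl⟩, hi⟩ := hN (C * K + C) (by nlinarith) a b hab _ hqg
    (by obtain ⟨i, hi⟩ := ha; exact ⟨i, by simp only; rw [hi]⟩)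
    (by obtain ⟨i, hi⟩ := hb; exact ⟨i, by simp only; rw [hi]⟩) t ht
  refine ⟨c i, ⟨i, rfl⟩, (hund _ _).1.trans ?_⟩
  have := mul_le_mul_of_nonneg_left hi (show 0 ≤ C by linarith)
  linarith

/-- An undistorted subgroup with empty relative Morse boundary contains the
endpoints of only boundedly long `N`-Morse geodesics (up to error `r`): otherwise the geodesics of
`E` joining these endpoints would subconverge to a ray of `E` that is Morse in `G`. -/
lemma edge_bound (S : Finset G) (hS : Subgroup.closure (S : Set G) = ⊤) (E : Subgroup G)
    (hU : FGUndistorted (S : Set G) E) (hR : RelMorseEmpty (S : Set G) E) (N : ℝ → ℝ) {r : ℝ}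
    (hr : 0 ≤ r) :
    ∃ D : ℝ, ∀ γ : ℕ → G, IsGeodSeq (wdist (S : Set G)) γ →
      MorseSet (wdist (S : Set G)) N (range γ) → ∀ m n : ℕ, m ≤ n →
      InNbhd (wdist (S : Set G)) (E : Set G) r (γ m) →
      InNbhd (wdist (S : Set G)) (E : Set G) r (γ n) → (n : ℝ) - m ≤ D := by
  have hd := wdist_pdist hS
  obtain ⟨T, hT, C, hC, hund⟩ := hU
  have hC0 : 0 ≤ C := by linarith
  have hdT := wdist_pdist hT
  obtain ⟨N', hN'⟩ := morse_subsegment hd N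
  obtain ⟨ρ, hρ, hfel⟩ := fellow hd N' hC hr
  by_contra hcon
  push Not at hcon
  choose γ hγ hM m n hmn hm hn hlong using fun k : ℕ => hcon k
  choose h hh hhd using hm
  choose h' hh' hhd' using hn
  -- translate so that each geodesic starts near the identity
  set g : ℕ → ℕ → G := fun k i => (h k)⁻¹ * γ k i with hg
  have hgg : ∀ k, IsGeodSeq (wdist (S : Set G)) (g k) := by
    intro k i j
    simp only [hg, wdist_mul_left]
    exact hγ k i j
  have hgM : ∀ k, MorseSet (wdist (S : Set G)) N' (g k '' Icc (m k) (n k)) := by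
    intro k
    have := (hN' (γ k) (hγ k) (hM k) (m k) (n k) (hmn k)).mul_left (h k)⁻¹
    rwa [image_image] at this
  set x : ℕ → E := fun k => ⟨(h k)⁻¹ * h' k, E.mul_mem (E.inv_mem (hh k)) (hh' k)⟩ with hx
  choose σ hσ0 hσL hσ using fun k => exists_geodSeg hT (x k)
  set L : ℕ → ℕ := fun k => wordLength (T : Set E) (x k) with hL
  have hqg := fun k => undist_geodSeg hC hund (hσ k)
  have hstart : ∀ k, wdist (S : Set G) (σ k 0 : G) (g k (m k)) ≤ r := by
    intro k
    have := hhd k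
    rw [hd.comm, ← wdist_mul_left (h k)⁻¹] at this
    simpa [hσ0, hg] using this
  have hfin : ∀ k, wdist (S : Set G) (σ k (L k) : G) (g k (n k)) ≤ r := by
    intro k
    have := hhd' k
    rw [hd.comm, ← wdist_mul_left (h k)⁻¹] at this
    rw [hσL]
    simpa [hg, hx] using this
  have hfellow := fun k => hfel (g k) (m k) (n k) (fun i => (σ k i : G)) (L k) (hgg k) (hmn k)
    (hgM k) (hqg k) (hstart k) (hfin k)
  have hLk : ∀ B : ℕ, ∀ᶠ k in (hyperfilter ℕ : Filter ℕ), B ≤ L k := by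
    intro B
    apply Nat.hyperfilter_le_atTop
    obtain ⟨k₀, hk₀⟩ := exists_nat_ge (2 * r + C * B + C)
    filter_upwards [eventually_ge_atTop k₀] with k hk
    by_contra hlt
    push Not at hlt
    have e1 := hgg k (n k) (m k)
    have e2 := le_abs_self ((n k : ℝ) - m k)
    have e3 := hd.tri (g k (n k)) (σ k (L k) : G) (g k (m k))
    have e4 := hd.tri (σ k (L k) : G) (σ k 0 : G) (g k (m k))
    have e5 := hd.comm (g k (n k)) (σ k (L k) : G)
    have e6 := (hqg k (L k) le_rfl 0 (Nat.zero_le _)).2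
    have e7 : |(L k : ℝ) - (0 : ℕ)| ≤ B := by
      rw [Nat.cast_zero, sub_zero, abs_of_nonneg (by positivity)]
      exact_mod_cast hlt.le
    have e8 := mul_le_mul_of_nonneg_left e7 hC0
    have e9 := hlong k
    have e10 : (k₀ : ℝ) ≤ k := by exact_mod_cast hk
    have e11 := hstart k
    have e12 := hfin k
    linarith
  have hlen : ∀ k i, i ≤ L k → wdist (T : Set E) 1 (σ k i) = i := by
    intro k i hi
    have := hσ k 0 (Nat.zero_le _) i hi
    rw [hσ0] at this
    rw [this]
    simp
  -- the ultralimit of the geodesics of `E`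
  have hlim : ∀ i, ∃ e : E, ∀ᶠ k in (hyperfilter ℕ : Filter ℕ), σ k i = e := by
    intro i
    have := (Ultrafilter.eventually_exists_mem_iff (f := hyperfilter ℕ)
      (P := fun (e : E) k => σ k i = e) (finite_ball hT T.finite_toSet i)).1 (by
        filter_upwards [hLk i] with k hk
        refine ⟨σ k i, ?_, rfl⟩
        have h1 := hlen k i hk
        rw [wdist_one_left] at h1
        have h2 : wordLength (T : Set E) (σ k i) = i := by exact_mod_cast h1
        exact h2.le)
    obtain ⟨e, -, he⟩ := this
    exact ⟨e, he⟩
  choose c hc using hlim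
  have hcgeod : IsGeodSeq (wdist (T : Set E)) c := by
    intro i j
    obtain ⟨k, h1, h2, h3, h4⟩ := ((hc i).and ((hc j).and ((hLk i).and (hLk j)))).exists
    rw [← h1, ← h2]
    exact hσ k i h3 j h4
  refine not_morse_of_relEmpty hT hC hund hR hcgeod
    ⟨fun K => max ρ (N' (K + 2 * ρ)) + ρ, ?_⟩
  rintro K hK a b hab α hα ⟨i, hi⟩ ⟨j, hj⟩ t ht
  simp only at hi hj
  set R := max ρ (N' (K + 2 * ρ)) + ρ with hRdef
  -- points of `σ k` within `R` of `α t` have index at most `B`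
  obtain ⟨B, hB⟩ := exists_nat_ge (C * (wdist (S : Set G) 1 (α t) + R) + C)
  have hev : ∀ᶠ k in (hyperfilter ℕ : Filter ℕ), ∀ l ∈ Iic B, σ k l = c l :=
    (Filter.eventually_all_finite (Set.finite_Iic B)).2 (fun l _ => hc l)
  obtain ⟨k, h1, h2, h3, h4, h5⟩ :=
    ((hc i).and ((hc j).and ((hLk i).and ((hLk j).and hev)))).exists
  obtain ⟨_, ⟨q, hq, rfl⟩, hqd⟩ := (hgM k).near hd hρ hα
    (by rw [← hi, ← h1]; exact (hfellow k).1 i h3)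
    (by rw [← hj, ← h2]; exact (hfellow k).1 j h4) ht
  obtain ⟨l, hl, hld⟩ := (hfellow k).2 q hq
  have hdist : wdist (S : Set G) (α t) (σ k l : G) ≤ R := by
    have := hd.tri (α t) (g k q) (σ k l : G)
    rw [hRdef]; linarith
  have hlB : l ≤ B := by
    have e1 := (hund 1 (σ k l)).1
    rw [hlen k l hl] at e1
    have e2 := hd.tri (1 : G) (α t) (σ k l : G)
    have e3 : C * wdist (S : Set G) ((1 : E) : G) (σ k l : G)
        ≤ C * (wdist (S : Set G) 1 (α t) + R) :=
      mul_le_mul_of_nonneg_left (by rw [OneMemClass.coe_one]; linarith) hC0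
    have : (l : ℝ) ≤ B := by linarith
    exact_mod_cast this
  refine ⟨(c l : G), ⟨l, rfl⟩, ?_⟩
  rw [← h5 l hlB]
  exact hdist

end Edge

/-! ### Frontiers of edges of the tree in the Cayley graph -/

/-- The frontier of the tree edge `{a, b}` in the Cayley graph: the vertices `x` having a
neighbour `x * s` such that the orbit map `g ↦ g • p` sends `x` and `x * s` to different sides
of the edge. -/
def Front {G VT : Type*} [Group G] [MulAction G VT] (S : Set G) (T : SimpleGraph VT) (p a b : VT) :
    Set G :=
  {x | ∃ s, (s ∈ S ∨ s⁻¹ ∈ S) ∧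
    ((x • p ∈ halfspace T a b ∧ (x * s) • p ∈ halfspace T b a) ∨
      (x • p ∈ halfspace T b a ∧ (x * s) • p ∈ halfspace T a b))}

section Fronts

variable {G VT : Type*} [Group G] [MulAction G VT] {T : SimpleGraph VT} {p : VT}

lemma front_symm {S : Set G} {a b : VT} {x : G} (h : x ∈ Front S T p a b) :
    x ∈ Front S T p b a := by
  obtain ⟨s, hs, h⟩ := h
  exact ⟨s, hs, h.symm⟩

lemma front_smul {S : Set G} (hT : T.IsTree)
    (hadj : ∀ (g : G) (a b : VT), T.Adj a b → T.Adj (g • a) (g • b)) (g : G) (a b : VT) (x : G) :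
    g * x ∈ Front S T p (g • a) (g • b) ↔ x ∈ Front S T p a b := by
  simp only [Front, Set.mem_setOf_eq, mul_smul, smul_mem_halfspace hT hadj]

lemma front_iff_one {S : Set G} (hT : T.IsTree)
    (hadj : ∀ (g : G) (a b : VT), T.Adj a b → T.Adj (g • a) (g • b)) (a b : VT) (x : G) :
    x ∈ Front S T p a b ↔ 1 ∈ Front S T p (x⁻¹ • a) (x⁻¹ • b) := by
  rw [← front_smul hT hadj x⁻¹ a b x, inv_mul_cancel]

/-- Only finitely many edges have the identity on their frontier. -/
lemma finite_front_one {S : Set G} (hfin : S.Finite) (hT : T.IsTree) :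
    {e : VT × VT | T.Adj e.1 e.2 ∧ (1 : G) ∈ Front S T p e.1 e.2}.Finite := by
  have hL : {s : G | s ∈ S ∨ s⁻¹ ∈ S}.Finite := by
    apply (hfin.union (hfin.image (fun s => s⁻¹))).subset
    rintro s (hs | hs)
    · exact Or.inl hs
    · exact Or.inr ⟨s⁻¹, hs, inv_inv s⟩
  refine (hL.biUnion (fun s _ => (finite_sep hT p (s • p)).union
    (finite_sep hT (s • p) p))).subset ?_
  rintro ⟨a, b⟩ ⟨hab, s, hs, h⟩
  simp only [one_smul, one_mul] at h
  refine mem_biUnion (x := s) hs ?_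
  rcases h with h | h
  · exact Or.inl ⟨hab, h.1, h.2⟩
  · exact Or.inr ⟨hab, h.2, h.1⟩

lemma finite_front {S : Set G} (hfin : S.Finite) (hT : T.IsTree)
    (hadj : ∀ (g : G) (a b : VT), T.Adj a b → T.Adj (g • a) (g • b)) (x : G) :
    {e : VT × VT | T.Adj e.1 e.2 ∧ x ∈ Front S T p e.1 e.2}.Finite := by
  refine ((finite_front_one (p := p) hfin hT).image (fun e => x • e)).subset ?_
  rintro ⟨a, b⟩ ⟨hab, hx⟩
  exact ⟨x⁻¹ • (a, b), ⟨hadj _ _ _ hab, (front_iff_one hT hadj a b x).1 hx⟩, smul_inv_smul _ _⟩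

lemma exists_switch {P : ℕ → Prop} {m n : ℕ} (h : m ≤ n) (hm : P m) (hn : ¬ P n) :
    ∃ k, m ≤ k ∧ k < n ∧ P k ∧ ¬ P (k + 1) := by
  induction n, h using Nat.le_induction with
  | base => exact absurd hm hn
  | succ n hmn ih =>
    by_cases hP : P n
    · exact ⟨n, hmn, by omega, hP, hn⟩
    · obtain ⟨k, h1, h2, h3⟩ := ih hP
      exact ⟨k, h1, by omega, h3⟩

/-- A path in the Cayley graph whose ends lie over different sides of an edge meets the frontier
of that edge. -/
lemma cross {S : Set G} (hS : Subgroup.closure S = ⊤) (hT : T.IsTree) {a b : VT} (hab : T.Adj a b)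
    {c : ℕ → G} {m n : ℕ} (hmn : m ≤ n)
    (hc : ∀ k, m ≤ k → k < n → wdist S (c k) (c (k + 1)) = 1)
    (hm : c m • p ∈ halfspace T a b) (hn : c n • p ∈ halfspace T b a) :
    ∃ k, m ≤ k ∧ k < n ∧ c k ∈ Front S T p a b := by
  obtain ⟨k, h1, h2, h3, h4⟩ := exists_switch (P := fun k => c k • p ∈ halfspace T a b) hmn hm
    (not_mem_halfspace hn)
  refine ⟨k, h1, h2, (c k)⁻¹ * c (k + 1), letter_of_wdist_one hS (hc k h1 h2), Or.inl ⟨h3, ?_⟩⟩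
  rw [mul_inv_cancel_left]
  exact mem_halfspace_of_not hT hab h4

lemma geodSeq_succ {S : Set G} {γ : ℕ → G} (hγ : IsGeodSeq (wdist S) γ) (k : ℕ) :
    wdist S (γ k) (γ (k + 1)) = 1 := by
  rw [hγ]; push_cast; rw [sub_add_cancel_left]; simp

lemma exists_unif {Z : Type*} {V : Set Z} (hV : V.Finite) {P : Z → ℝ → Prop}
    (mono : ∀ z r r', r ≤ r' → P z r → P z r') (h : ∀ z ∈ V, ∃ r, P z r) :
    ∃ r : ℝ, 0 ≤ r ∧ ∀ z ∈ V, P z r := by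
  choose! f hf using h
  obtain ⟨r, hr⟩ := (hV.image f).bddAbove
  exact ⟨max r 0, le_max_right _ _, fun z hz =>
    mono _ _ _ ((hr ⟨z, hz, rfl⟩).trans (le_max_left _ _)) (hf z hz)⟩

/-- If `V` is finite then the elements `x` with `x⁻¹ • z ∈ V` lie in finitely many right translates
of the stabiliser of `z`, hence at bounded distance from it. -/
lemma near_stabilizer {Z : Type*} [MulAction G Z] (S : Set G) {V : Set Z} (hV : V.Finite) (z : Z) :
    ∃ K : ℝ, 0 ≤ K ∧ ∀ x : G, x⁻¹ • z ∈ V → ∃ h ∈ MulAction.stabilizer G z, wdist S x h ≤ K := by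
  obtain ⟨K, hK, H⟩ := exists_unif hV
    (P := fun v K => ∀ x : G, x⁻¹ • z = v → ∃ h ∈ MulAction.stabilizer G z, wdist S x h ≤ K)
    (fun v r r' hr H x hx => by
      obtain ⟨h, h1, h2⟩ := H x hx
      exact ⟨h, h1, h2.trans hr⟩)
    (fun v _ => by
      by_cases hy : ∃ y : G, y⁻¹ • z = v
      · obtain ⟨y, hy⟩ := hy
        refine ⟨wdist S 1 y⁻¹, fun x hx => ⟨x * y⁻¹, ?_, ?_⟩⟩
        · rw [MulAction.mem_stabilizer_iff, mul_smul, hy, ← hx, smul_inv_smul]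
        · have := wdist_mul_left (S := S) x 1 y⁻¹
          rw [mul_one] at this
          exact this.le
      · exact ⟨0, fun x hx => absurd ⟨x, hx⟩ hy⟩)
  exact ⟨K, hK, fun x hx => H _ hx x rfl⟩

/-- The frontier of an edge lies at bounded distance from the stabiliser of the edge. -/
lemma front_near_edgeStab {S : Set G} (hfin : S.Finite) (hT : T.IsTree)
    (hadj : ∀ (g : G) (a b : VT), T.Adj a b → T.Adj (g • a) (g • b)) {a b : VT} (hab : T.Adj a b) :
    ∃ K : ℝ, 0 ≤ K ∧ ∀ x ∈ Front S T p a b, InNbhd (wdist S) (edgeStab G a b : Set G) K x := by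
  obtain ⟨K, hK, H⟩ := near_stabilizer S (finite_front_one (G := G) (p := p) hfin hT) (a, b)
  refine ⟨K, hK, fun x hx => ?_⟩
  obtain ⟨h, hh, hd⟩ := H x ⟨hadj _ _ _ hab, (front_iff_one hT hadj a b x).1 hx⟩
  rw [MulAction.mem_stabilizer_iff, Prod.smul_mk, Prod.mk.injEq] at hh
  exact ⟨h, ⟨hh.1, hh.2⟩, hd⟩

/-- An `N`-Morse geodesic ray spends a uniformly bounded time near the frontier of any edge. -/
lemma front_bound (S : Finset G) (hS : Subgroup.closure (S : Set G) = ⊤) (hT : T.IsTree)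
    (hadj : ∀ (g : G) (a b : VT), T.Adj a b → T.Adj (g • a) (g • b))
    (hedge : ∀ a b : VT, T.Adj a b →
      FGUndistorted (S : Set G) (edgeStab G a b) ∧
      RelMorseEmpty (S : Set G) (edgeStab G a b)) (N : ℝ → ℝ) {r : ℝ} (hr : 0 ≤ r) :
    ∃ D : ℝ, 0 ≤ D ∧ ∀ a b, T.Adj a b → ∀ γ : ℕ → G, IsGeodSeq (wdist (S : Set G)) γ →
      MorseSet (wdist (S : Set G)) N (range γ) → ∀ m n : ℕ, m ≤ n →
      InNbhd (wdist (S : Set G)) (Front (S : Set G) T p a b) r (γ m) →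
      InNbhd (wdist (S : Set G)) (Front (S : Set G) T p a b) r (γ n) → (n : ℝ) - m ≤ D := by
  have hd := wdist_pdist hS
  obtain ⟨D, hD, H⟩ := exists_unif (finite_front_one (G := G) (p := p) S.finite_toSet hT)
    (P := fun e D => ∀ γ : ℕ → G, IsGeodSeq (wdist (S : Set G)) γ →
      MorseSet (wdist (S : Set G)) N (range γ) → ∀ m n : ℕ, m ≤ n →
      InNbhd (wdist (S : Set G)) (Front (S : Set G) T p e.1 e.2) r (γ m) →
      InNbhd (wdist (S : Set G)) (Front (S : Set G) T p e.1 e.2) r (γ n) → (n : ℝ) - m ≤ D)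
    (fun e D D' hD H γ h1 h2 m n hmn h3 h4 => (H γ h1 h2 m n hmn h3 h4).trans hD)
    (fun e he => by
      obtain ⟨K, hK, hF⟩ := front_near_edgeStab (p := p) S.finite_toSet hT hadj he.1
      obtain ⟨D, hD⟩ := edge_bound S hS (edgeStab G e.1 e.2) (hedge _ _ he.1).1 (hedge _ _ he.1).2
        N (add_nonneg hr hK)
      refine ⟨D, fun γ h1 h2 m n hmn h3 h4 => hD γ h1 h2 m n hmn ?_ ?_⟩
      · obtain ⟨x, hx, hxd⟩ := h3
        obtain ⟨y, hy, hyd⟩ := hF x hx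
        exact ⟨y, hy, (hd.tri _ x _).trans (add_le_add hxd hyd)⟩
      · obtain ⟨x, hx, hxd⟩ := h4
        obtain ⟨y, hy, hyd⟩ := hF x hx
        exact ⟨y, hy, (hd.tri _ x _).trans (add_le_add hxd hyd)⟩)
  refine ⟨D, hD, fun a b hab γ h1 h2 m n hmn h3 h4 => ?_⟩
  obtain ⟨x, hx, hxd⟩ := id h3
  have htr : ∀ k, InNbhd (wdist (S : Set G)) (Front (S : Set G) T p a b) r (γ k) →
      InNbhd (wdist (S : Set G)) (Front (S : Set G) T p (x⁻¹ • a) (x⁻¹ • b)) r (x⁻¹ * γ k) := by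
    intro k hk
    refine (hk.mul_left x⁻¹).subset ?_
    rintro _ ⟨y, hy, rfl⟩
    exact (front_smul hT hadj _ _ _ _).2 hy
  refine H (x⁻¹ • a, x⁻¹ • b) ⟨hadj _ _ _ hab, (front_iff_one hT hadj a b x).1 hx⟩
    (fun k => x⁻¹ * γ k) (fun i j => by rw [wdist_mul_left, h1]) ?_ m n hmn (htr m h3) (htr n h4)
  have := h2.mul_left x⁻¹
  rwa [← range_comp] at this

end Fronts

/-! ### Rays crossing the same edge -/

section Crossing

variable {G VT : Type*} [Group G] [MulAction G VT] {T : SimpleGraph VT} {p : VT}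

/-- Any two points of the frontier of an edge are joined, up to a bounded error at the end, by a
uniform quasi-geodesic inside the frontier, namely a translate of a geodesic of an edge group. -/
lemma front_qg (S : Finset G) (hS : Subgroup.closure (S : Set G) = ⊤) (hT : T.IsTree)
    (hadj : ∀ (g : G) (a b : VT), T.Adj a b → T.Adj (g • a) (g • b))
    (hedge : ∀ a b : VT, T.Adj a b → FGUndistorted (S : Set G) (edgeStab G a b)) :
    ∃ C : ℝ, 0 ≤ C ∧ ∀ a b, T.Adj a b → ∀ u ∈ Front (S : Set G) T p a b,
      ∀ v ∈ Front (S : Set G) T p a b, ∃ L : ℝ, 0 ≤ L ∧ ∃ β : ℝ → G,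
        IsQG (wdist (S : Set G)) C (Icc 0 L) β ∧ β 0 = u ∧ wdist (S : Set G) (β L) v ≤ C ∧
        ∀ τ ∈ Icc 0 L, β τ ∈ Front (S : Set G) T p a b := by
  have hd := wdist_pdist hS
  obtain ⟨C, hC, H⟩ := exists_unif (finite_front_one (G := G) (p := p) S.finite_toSet hT)
    (P := fun e C => ∀ v ∈ Front (S : Set G) T p e.1 e.2, ∃ L : ℝ, 0 ≤ L ∧ ∃ β : ℝ → G,
        IsQG (wdist (S : Set G)) C (Icc 0 L) β ∧ β 0 = 1 ∧ wdist (S : Set G) (β L) v ≤ C ∧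
        ∀ τ ∈ Icc 0 L, β τ ∈ Front (S : Set G) T p e.1 e.2)
    (fun e C C' hC H v hv => by
      obtain ⟨L, hL, β, h1, h2, h3, h4⟩ := H v hv
      exact ⟨L, hL, β, h1.mono hC, h2, h3.trans hC, h4⟩)
    (by
      rintro ⟨a, b⟩ ⟨hab, h1⟩
      obtain ⟨K, hK, hF⟩ := front_near_edgeStab (p := p) S.finite_toSet hT hadj hab
      obtain ⟨T0, hT0, C, hC, hund⟩ := hedge a b hab
      refine ⟨max (2 * C) K, fun v hv => ?_⟩
      obtain ⟨h, hh, hvd⟩ := hF v hv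
      obtain ⟨σ, hσ0, hσL, hσ⟩ := exists_geodSeg hT0 (⟨h, hh⟩ : edgeStab G a b)
      refine ⟨_, Nat.cast_nonneg _, fun t => (σ ⌊t⌋₊ : G),
        (isQG_floor (c := fun i => (σ i : G)) hC (undist_geodSeg hC hund hσ)).mono
          (le_max_left _ _), ?_, ?_, ?_⟩
      · simp [hσ0]
      · simp only [Nat.floor_natCast, hσL]
        rw [hd.comm]
        exact hvd.trans (le_max_right _ _)
      · intro τ _
        have h2 := (σ ⌊τ⌋₊).2
        have h3 := (front_smul (S := (S : Set G)) (p := p) hT hadj (σ ⌊τ⌋₊ : G) a b 1).2 h1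
        rwa [mul_one, MulAction.mem_stabilizer_iff.1 h2.1, MulAction.mem_stabilizer_iff.1 h2.2]
          at h3)
  refine ⟨C, hC, fun a b hab u hu v hv => ?_⟩
  obtain ⟨L, hL, β, h1, h2, h3, h4⟩ := H (u⁻¹ • a, u⁻¹ • b)
    ⟨hadj _ _ _ hab, (front_iff_one hT hadj a b u).1 hu⟩ (u⁻¹ * v)
    ((front_smul hT hadj _ _ _ _).2 hv)
  refine ⟨L, hL, fun t => u * β t, h1.mul_left u, by simp [h2], ?_, fun τ hτ => ?_⟩
  · have := wdist_mul_left (S := (S : Set G)) u (β L) (u⁻¹ * v)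
    rw [mul_inv_cancel_left] at this
    simp only [this]; exact h3
  · have := (front_smul (S := (S : Set G)) (p := p) hT hadj u _ _ _).2 (h4 τ hτ)
    simpa using this

/-- If a quasi-geodesic starts at its point closest to `1` and ends near a Morse set containing
`1`, then its starting point is near that set: preceding it by a geodesic from `1` gives
a quasi-geodesic. -/
lemma nearest {S : Set G} (hS : Subgroup.closure S = ⊤) {N : ℝ → ℝ} {A : Set G}
    (hA : MorseSet (wdist S) N A) (h1 : (1 : G) ∈ A) {C r a b : ℝ} (hr : 0 ≤ r) (hab : a ≤ b)
    {β : ℝ → G} (hβ : IsQG (wdist S) C (Icc a b) β)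
    (hmin : ∀ τ ∈ Icc a b, wdist S 1 (β a) ≤ wdist S 1 (β τ))
    (hend : InNbhd (wdist S) A r (β b)) :
    InNbhd (wdist S) A (max r (N (3 * C + 2 * r))) (β a) := by
  have hd := wdist_pdist hS
  obtain ⟨σ, hσ0, hσL, hσ⟩ := exists_geodSeg hS (β a)
  set ℓ := wordLength S (β a) with hℓ
  have hℓd : wdist S 1 (β a) = ℓ := wdist_one_left _
  have hC := hβ.1
  set δ : ℝ → G := fun t => if t < a then σ ⌊t - a + ℓ⌋₊ else β t with hδ
  have hℓ0 : (0 : ℝ) ≤ ℓ := Nat.cast_nonneg _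
  have key : ∀ s ∈ Icc (a - ℓ) b, ∀ t ∈ Icc (a - ℓ) b, s ≤ t →
      (t - s) / (3 * C) - 3 * C ≤ wdist S (δ s) (δ t) ∧
        wdist S (δ s) (δ t) ≤ 3 * C * (t - s) + 3 * C := by
    intro s hs t ht hst
    have hts : 0 ≤ t - s := sub_nonneg.2 hst
    have hm1 : t - s ≤ C * (t - s) := by nlinarith
    have hdv1 : (t - s) / (3 * C) ≤ t - s := div_le_self hts (by linarith)
    rcases lt_or_ge t a with hta | hta
    · have hsa : s < a := lt_of_le_of_lt hst hta
      have e1 : ⌊s - a + ℓ⌋₊ ≤ ℓ := Nat.floor_le_of_le (by linarith)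
      have e2 : ⌊t - a + ℓ⌋₊ ≤ ℓ := Nat.floor_le_of_le (by linarith)
      have e3 := hσ _ e1 _ e2
      obtain ⟨f1, f2⟩ := floor_diff (s := s - a + ℓ) (t := t - a + ℓ)
        (by linarith [hs.1]) (by linarith [ht.1])
      have e4 : |s - a + ℓ - (t - a + ℓ)| = t - s := by
        rw [abs_sub_comm, abs_of_nonneg (by linarith)]; ring
      rw [e4] at f1 f2
      simp only [hδ, if_pos hsa, if_pos hta, e3]
      constructor <;> nlinarith
    · rcases lt_or_ge s a with hsa | hsa
      · have e1 : ⌊s - a + ℓ⌋₊ ≤ ℓ := Nat.floor_le_of_le (by linarith)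
        have e2 := hσ _ e1 _ le_rfl
        rw [hσL] at e2
        have e3 := hσ 0 (Nat.zero_le _) _ e1
        rw [hσ0] at e3
        have e4 : ((⌊s - a + ℓ⌋₊ : ℕ) : ℝ) ≤ s - a + ℓ := Nat.floor_le (by linarith [hs.1])
        have e5 := Nat.lt_floor_add_one (s - a + ℓ)
        set i : ℝ := ((⌊s - a + ℓ⌋₊ : ℕ) : ℝ) with hi
        have hi0 : 0 ≤ i := Nat.cast_nonneg _
        have e6 : |i - (ℓ : ℝ)| = ℓ - i := by rw [abs_sub_comm, abs_of_nonneg (by linarith)]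
        rw [e6] at e2
        have e7 : |((0 : ℕ) : ℝ) - i| = i := by rw [Nat.cast_zero, zero_sub, abs_neg, abs_of_nonneg hi0]
        rw [e7] at e3
        simp only [hδ, if_pos hsa, if_neg (not_lt.2 hta)]
        set x := σ ⌊s - a + ℓ⌋₊
        have ha : a ∈ Icc a b := ⟨le_rfl, hab⟩
        have htI : t ∈ Icc a b := ⟨hta, ht.2⟩
        obtain ⟨q1, q2⟩ := hβ.2 a ha t htI
        have q3 : |a - t| = t - a := by rw [abs_sub_comm, abs_of_nonneg (by linarith)]
        rw [q3] at q1 q2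
        have k1 := hmin t htI
        have k2 := hd.tri 1 x (β t)
        have k3 := hd.tri (β a) x (β t)
        rw [hd.comm (β a) x] at k3
        have k4 := hd.tri x (β a) (β t)
        rw [hℓd] at k1
        constructor
        · have k5 : (t - s) / (3 * C) = ((t - a) / C + (a - s) / C) / 3 := by field_simp; ring
          have k6 : (a - s) / C ≤ a - s := div_le_self (by linarith) hC
          linarith
        · nlinarith
      · have hta' : t ∈ Icc a b := ⟨hta, ht.2⟩
        obtain ⟨q1, q2⟩ := hβ.2 s ⟨hsa, hs.2⟩ t hta'
        have q3 : |s - t| = t - s := by rw [abs_sub_comm, abs_of_nonneg (by linarith)]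
        rw [q3] at q1 q2
        simp only [hδ, if_neg (not_lt.2 hsa), if_neg (not_lt.2 hta)]
        have k := qg_div_mono hts hC (show C ≤ 3 * C by linarith)
        constructor <;> nlinarith
  have hqg : IsQG (wdist S) (3 * C) (Icc (a - ℓ) b) δ := by
    refine ⟨by linarith, fun s hs t ht => ?_⟩
    rcases le_total s t with hst | hst
    · rw [abs_sub_comm, abs_of_nonneg (sub_nonneg.2 hst)]
      exact key s hs t ht hst
    · rw [abs_of_nonneg (sub_nonneg.2 hst), hd.comm]
      exact key t ht s hs hst
  have hδa : δ a = β a := by simp [hδ]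
  have hδb : δ b = β b := by simp [hδ, not_lt.2 hab]
  have hδ0 : δ (a - ℓ) = 1 := by
    rcases Nat.eq_zero_or_pos ℓ with h | h
    · rw [h, Nat.cast_zero, sub_zero, hδa, ← hσL, h, hσ0]
    · have : (0 : ℝ) < ℓ := by exact_mod_cast h
      simp [hδ, this, hσ0]
  rw [← hδa]
  refine hA.near hd hr hqg ⟨1, h1, ?_⟩ (by rwa [hδb]) ⟨by linarith, hab⟩
  rw [hδ0, hd.self]; exact hr

/-- Two Morse rays from `1` meet the frontier of a common edge at uniformly close points. -/
lemma crossings_close (S : Finset G) (hS : Subgroup.closure (S : Set G) = ⊤) (hT : T.IsTree)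
    (hadj : ∀ (g : G) (a b : VT), T.Adj a b → T.Adj (g • a) (g • b))
    (hedge : ∀ a b : VT, T.Adj a b →
      FGUndistorted (S : Set G) (edgeStab G a b) ∧
      RelMorseEmpty (S : Set G) (edgeStab G a b)) (γ γ' : GRay G (S : Set G)) :
    ∃ D : ℝ, 0 ≤ D ∧ ∀ a b, T.Adj a b → ∀ m n : ℕ, γ.seq m ∈ Front (S : Set G) T p a b →
      γ'.seq n ∈ Front (S : Set G) T p a b → wdist (S : Set G) (γ.seq m) (γ'.seq n) ≤ D := by
  have hd := wdist_pdist hS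
  obtain ⟨C, hC, hQ⟩ := front_qg (p := p) S hS hT hadj (fun a b h => (hedge a b h).1)
  -- a ray which comes near a frontier it meets does so only near the meeting point
  have aux : ∀ (γ : GRay G (S : Set G)) (R : ℝ), 0 ≤ R → ∃ D, 0 ≤ D ∧ ∀ a b, T.Adj a b →
      ∀ m : ℕ, γ.seq m ∈ Front (S : Set G) T p a b → ∀ x ∈ Front (S : Set G) T p a b,
      InNbhd (wdist (S : Set G)) (range γ.seq) R x →
      wdist (S : Set G) (γ.seq m) x ≤ D := by
    intro γ R hR
    obtain ⟨N, hN⟩ := γ.morse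
    obtain ⟨D, hD, H⟩ := front_bound (p := p) S hS hT hadj hedge N hR
    refine ⟨D + R, by linarith, fun a b hab m hm x hx hxR => ?_⟩
    obtain ⟨_, ⟨k, rfl⟩, hk⟩ := hxR
    have hmF : InNbhd (wdist (S : Set G)) (Front (S : Set G) T p a b) R (γ.seq m) :=
      ⟨_, hm, by rw [hd.self]; exact hR⟩
    have hkF : InNbhd (wdist (S : Set G)) (Front (S : Set G) T p a b) R (γ.seq k) :=
      ⟨x, hx, by rw [hd.comm]; exact hk⟩
    have hmk : wdist (S : Set G) (γ.seq m) (γ.seq k) ≤ D := by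
      rw [γ.geod]
      rcases le_total m k with h | h
      · have e := H a b hab γ.seq γ.geod hN m k h hmF hkF
        have : (m : ℝ) ≤ k := by exact_mod_cast h
        rw [abs_sub_comm, abs_of_nonneg (by linarith)]; exact e
      · have e := H a b hab γ.seq γ.geod hN k m h hkF hmF
        have : (k : ℝ) ≤ m := by exact_mod_cast h
        rw [abs_of_nonneg (by linarith)]; exact e
    have := hd.tri (γ.seq m) (γ.seq k) x
    rw [hd.comm (γ.seq k) x] at this
    linarith
  obtain ⟨N, hN⟩ := γ.morse
  obtain ⟨N', hN'⟩ := γ'.morse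
  obtain ⟨D, hD, H⟩ := aux γ (max C (N (3 * C + 2 * C))) (hC.trans (le_max_left _ _))
  obtain ⟨D', hD', H'⟩ := aux γ' (max C (N' (3 * C + 2 * C))) (hC.trans (le_max_left _ _))
  refine ⟨D + D', by linarith, fun a b hab m n hm hn => ?_⟩
  obtain ⟨L, hL, β, hβ, hβ0, hβL, hβF⟩ := hQ a b hab _ hm _ hn
  -- the point of the quasi-geodesic closest to the identity is near both rays
  obtain ⟨τ, hτ, hmin⟩ : ∃ τ ∈ Icc 0 L, ∀ t ∈ Icc 0 L,
      wdist (S : Set G) 1 (β τ) ≤ wdist (S : Set G) 1 (β t) := by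
    obtain ⟨τ, hτ, h⟩ := (wellFounded_lt (α := ℕ)).onFun (f := fun t => wordLength (S : Set G) (β t))
      |>.has_min (Icc 0 L) ⟨0, le_rfl, hL⟩
    refine ⟨τ, hτ, fun t ht => ?_⟩
    rw [wdist_one_left, wdist_one_left]
    exact_mod_cast not_lt.1 (h t ht)
  have n1 := nearest hS hN' ⟨0, γ'.base⟩ hC hτ.2
    (β := β) (C := C) ⟨hβ.1, fun s hs t ht => hβ.2 s ⟨hτ.1.trans hs.1, hs.2⟩ t ⟨hτ.1.trans ht.1, ht.2⟩⟩
    (fun t ht => hmin t ⟨hτ.1.trans ht.1, ht.2⟩) ⟨_, ⟨n, rfl⟩, hβL⟩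
  have n2 := nearest hS hN ⟨0, γ.base⟩ hC (show -τ ≤ 0 by linarith [hτ.1])
    (β := fun t => β (-t)) (C := C) ⟨hβ.1, fun s hs t ht => by
      have := hβ.2 (-s) ⟨by linarith [hs.2], by linarith [hs.1, hτ.2]⟩ (-t)
        ⟨by linarith [ht.2], by linarith [ht.1, hτ.2]⟩
      rwa [show -s - -t = t - s by ring, abs_sub_comm t s] at this⟩
    (fun t ht => by
      simp only [neg_neg]
      exact hmin (-t) ⟨by linarith [ht.2], by linarith [ht.1, hτ.2]⟩)
    ⟨_, ⟨m, rfl⟩, by simp only [neg_zero, hβ0, hd.self]; exact hC⟩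
  simp only [neg_neg] at n2
  have k1 := H a b hab m hm _ (hβF τ hτ) n2
  have k2 := H' a b hab n hn _ (hβF τ hτ) n1
  have := hd.tri (γ.seq m) (β τ) (γ'.seq n)
  rw [hd.comm (β τ)] at this
  linarith

end Crossing

/-! ### Sides of edges as clopen subsets of the Morse boundary -/

/-- The orbit of `p` along `γ` is eventually in the halfspace of `{a, b}` containing `b`. -/
def Ev {G VT : Type*} [Group G] [MulAction G VT] (T : SimpleGraph VT) (p : VT) (γ : ℕ → G)
    (a b : VT) : Prop :=
  ∃ n₀ : ℕ, ∀ n ≥ n₀, γ n • p ∈ halfspace T a b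

section Sides

variable {G VT : Type*} [Group G] [MulAction G VT] {T : SimpleGraph VT} {p : VT}

lemma Ev.not_symm {γ : ℕ → G} {a b : VT} (h : Ev T p γ a b) : ¬ Ev T p γ b a := by
  obtain ⟨m, hm⟩ := h
  rintro ⟨n, hn⟩
  exact not_mem_halfspace (hm (max m n) (le_max_left _ _)) (hn _ (le_max_right _ _))

/-- Points over different sides of an edge are separated by the frontier of the edge. -/
lemma cross_near {S : Set G} (hS : Subgroup.closure S = ⊤) (hT : T.IsTree) {a b : VT}
    (hab : T.Adj a b) {x y : G} (hx : x • p ∈ halfspace T a b) (hy : y • p ∈ halfspace T b a) :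
    ∃ z ∈ Front S T p a b, wdist S x z ≤ wdist S x y := by
  obtain ⟨σ, h0, hL, hσ⟩ := exists_geodSeg hS (x⁻¹ * y)
  set ℓ := wordLength S (x⁻¹ * y) with hℓ
  obtain ⟨k, -, hk, hkF⟩ := cross (p := p) hS hT hab (c := fun i => x * σ i) (Nat.zero_le ℓ)
    (fun k _ hk => by
      rw [wdist_mul_left, hσ k hk.le (k + 1) hk]; push_cast; rw [sub_add_cancel_left]; simp)
    (by simpa [h0] using hx) (by simpa [hL] using hy)
  refine ⟨_, hkF, ?_⟩
  have h1 := wdist_mul_left (S := S) x (σ 0) (σ k)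
  rw [hσ 0 (Nat.zero_le _) k hk.le, h0, mul_one] at h1
  have h2 : wdist S x y = ℓ := rfl
  have h3 : (k : ℝ) ≤ ℓ := by exact_mod_cast hk.le
  rw [h1, h2, Nat.cast_zero, zero_sub, abs_neg, abs_of_nonneg (Nat.cast_nonneg _)]
  exact h3

/-- `N`-Morse rays from `1` leave every neighbourhood of the frontier of an edge after a time
independent of the ray. -/
lemma front_escape (S : Finset G) (hS : Subgroup.closure (S : Set G) = ⊤) (hT : T.IsTree)
    (hadj : ∀ (g : G) (a b : VT), T.Adj a b → T.Adj (g • a) (g • b))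
    (hedge : ∀ a b : VT, T.Adj a b →
      FGUndistorted (S : Set G) (edgeStab G a b) ∧
      RelMorseEmpty (S : Set G) (edgeStab G a b)) (p : VT) {a b : VT} (hab : T.Adj a b)
    (N : ℝ → ℝ) {r : ℝ} (hr : 0 ≤ r) :
    ∃ M : ℕ, ∀ γ : GRay G (S : Set G), MorseSet (wdist (S : Set G)) N (range γ.seq) →
      ∀ n ≥ M, ¬ InNbhd (wdist (S : Set G)) (Front (S : Set G) T p a b) r (γ.seq n) := by
  by_cases hne : (Front (S : Set G) T p a b).Nonempty
  · obtain ⟨x, hx⟩ := hne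
    obtain ⟨D, hD, H⟩ := front_bound (p := p) S hS hT hadj hedge N
      (hr.trans (le_max_left r (wdist (S : Set G) 1 x)))
    refine ⟨⌊D⌋₊ + 1, fun γ hγ n hn hF => ?_⟩
    have h := H a b hab γ.seq γ.geod hγ 0 n (Nat.zero_le _)
      ⟨x, hx, by rw [γ.base]; exact le_max_right _ _⟩ (hF.mono (le_max_left _ _))
    have h2 := Nat.lt_floor_add_one D
    have h3 : ((⌊D⌋₊ + 1 : ℕ) : ℝ) ≤ n := by exact_mod_cast hn
    push_cast at h h3
    linarith
  · exact ⟨0, fun γ _ n _ ⟨x, hx, _⟩ => hne ⟨x, hx⟩⟩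

/-- The side of an edge on which an `N`-Morse ray ends up is decided by its position at a time
independent of the ray. -/
lemma side_const (S : Finset G) (hS : Subgroup.closure (S : Set G) = ⊤) (hT : T.IsTree)
    (hadj : ∀ (g : G) (a b : VT), T.Adj a b → T.Adj (g • a) (g • b))
    (hedge : ∀ a b : VT, T.Adj a b →
      FGUndistorted (S : Set G) (edgeStab G a b) ∧
      RelMorseEmpty (S : Set G) (edgeStab G a b)) (p : VT) {a b : VT} (hab : T.Adj a b)
    (N : ℝ → ℝ) :
    ∃ M : ℕ, ∀ γ : GRay G (S : Set G), MorseSet (wdist (S : Set G)) N (range γ.seq) →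
      (γ.seq M • p ∈ halfspace T a b ∧ Ev T p γ.seq a b) ∨
      (γ.seq M • p ∈ halfspace T b a ∧ Ev T p γ.seq b a) := by
  have hd := wdist_pdist hS
  obtain ⟨M, hM⟩ := front_escape S hS hT hadj hedge p hab N le_rfl
  have aux : ∀ γ : GRay G (S : Set G), MorseSet (wdist (S : Set G)) N (range γ.seq) →
      ∀ n ≥ M, γ.seq n ∉ Front (S : Set G) T p a b := fun γ hγ n hn hF =>
    hM γ hγ n hn ⟨_, hF, (hd.self _).le⟩
  refine ⟨M, fun γ hγ => ?_⟩
  rcases mem_halfspace_or hT hab (γ.seq M • p) with h | h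
  · refine Or.inl ⟨h, M, fun n hn => ?_⟩
    by_contra hcon
    obtain ⟨k, h1, -, h3⟩ := cross (p := p) hS hT hab hn (fun k _ _ => geodSeq_succ γ.geod k) h
      (mem_halfspace_of_not hT hab hcon)
    exact aux γ hγ k h1 h3
  · refine Or.inr ⟨h, M, fun n hn => ?_⟩
    by_contra hcon
    obtain ⟨k, h1, -, h3⟩ := cross (p := p) hS hT hab.symm hn
      (fun k _ _ => geodSeq_succ γ.geod k) h (mem_halfspace_of_not hT hab.symm hcon)
    exact aux γ hγ k h1 (front_symm h3)

lemma ev_or (S : Finset G) (hS : Subgroup.closure (S : Set G) = ⊤) (hT : T.IsTree)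
    (hadj : ∀ (g : G) (a b : VT), T.Adj a b → T.Adj (g • a) (g • b))
    (hedge : ∀ a b : VT, T.Adj a b →
      FGUndistorted (S : Set G) (edgeStab G a b) ∧
      RelMorseEmpty (S : Set G) (edgeStab G a b)) (p : VT) {a b : VT} (hab : T.Adj a b)
    (γ : GRay G (S : Set G)) : Ev T p γ.seq a b ∨ Ev T p γ.seq b a := by
  obtain ⟨N, hN⟩ := γ.morse
  obtain ⟨M, hM⟩ := side_const S hS hT hadj hedge p hab N
  exact (hM γ hN).imp And.right And.right

lemma ev_of_grayRel (S : Finset G) (hS : Subgroup.closure (S : Set G) = ⊤) (hT : T.IsTree)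
    (hadj : ∀ (g : G) (a b : VT), T.Adj a b → T.Adj (g • a) (g • b))
    (hedge : ∀ a b : VT, T.Adj a b →
      FGUndistorted (S : Set G) (edgeStab G a b) ∧
      RelMorseEmpty (S : Set G) (edgeStab G a b)) (p : VT) {a b : VT} (hab : T.Adj a b)
    {γ γ' : GRay G (S : Set G)} (hrel : grayRel (S : Set G) γ γ') (h : Ev T p γ.seq a b) :
    Ev T p γ'.seq a b := by
  have hd := wdist_pdist hS
  refine (ev_or S hS hT hadj hedge p hab γ').resolve_right ?_
  rintro ⟨n₁, hn₁⟩
  obtain ⟨n₀, hn₀⟩ := h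
  obtain ⟨r, -, hr⟩ := hrel
  obtain ⟨N, hN⟩ := γ.morse
  obtain ⟨M, hM⟩ := front_escape S hS hT hadj hedge p hab N (le_max_right r 0)
  set n := max n₁ (max n₀ M + ⌈r⌉₊) with hn
  obtain ⟨_, ⟨k, rfl⟩, hk⟩ := hr (γ'.seq n) ⟨n, rfl⟩
  have e1 : wdist (S : Set G) 1 (γ'.seq n) = n := by
    rw [← γ'.base, γ'.geod, Nat.cast_zero, zero_sub, abs_neg, abs_of_nonneg (Nat.cast_nonneg _)]
  have e2 : wdist (S : Set G) 1 (γ.seq k) = k := by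
    rw [← γ.base, γ.geod, Nat.cast_zero, zero_sub, abs_neg, abs_of_nonneg (Nat.cast_nonneg _)]
  have hk' : wdist (S : Set G) (γ.seq k) (γ'.seq n) ≤ r := by rw [hd.comm]; exact hk
  have hkn : max n₀ M ≤ k := by
    have h1 := hd.tri 1 (γ.seq k) (γ'.seq n)
    have h2 := Nat.le_ceil r
    have h3 : ((max n₀ M + ⌈r⌉₊ : ℕ) : ℝ) ≤ n := by exact_mod_cast le_max_right _ _
    push_cast at h3
    have : ((max n₀ M : ℕ) : ℝ) ≤ k := by push_cast; linarith
    exact_mod_cast this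
  obtain ⟨z, hz, hzd⟩ := cross_near (p := p) hS hT hab
    (hn₀ k ((le_max_left _ _).trans hkn)) (hn₁ n (le_max_left _ _))
  exact hM γ hN k ((le_max_right _ _).trans hkn) ⟨z, hz, hzd.trans (hk'.trans (le_max_left _ _))⟩

lemma exists_isOpen_side (S : Finset G) (hS : Subgroup.closure (S : Set G) = ⊤) (hT : T.IsTree)
    (hadj : ∀ (g : G) (a b : VT), T.Adj a b → T.Adj (g • a) (g • b))
    (hedge : ∀ a b : VT, T.Adj a b →
      FGUndistorted (S : Set G) (edgeStab G a b) ∧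
      RelMorseEmpty (S : Set G) (edgeStab G a b)) (p : VT) {a b : VT} (hab : T.Adj a b) :
    ∃ U : Set (MorseBoundary G (S : Set G)), IsOpen U ∧
      ∀ γ : GRay G (S : Set G), Quot.mk (grayRel (S : Set G)) γ ∈ U ↔ Ev T p γ.seq a b := by
  have hsymm : ∀ γ γ' : GRay G (S : Set G), grayRel (S : Set G) γ γ' →
      grayRel (S : Set G) γ' γ := fun γ γ' ⟨r, h1, h2⟩ => ⟨r, h2, h1⟩
  refine ⟨{ξ | Quot.lift (fun γ : GRay G (S : Set G) => Ev T p γ.seq a b) (fun γ γ' h =>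
    propext ⟨ev_of_grayRel S hS hT hadj hedge p hab h,
      ev_of_grayRel S hS hT hadj hedge p hab (hsymm _ _ h)⟩) ξ}, ?_, fun γ => Iff.rfl⟩
  refine isOpen_iSup_iff.2 fun N => ?_
  refine isOpen_coinduced.2 ?_
  obtain ⟨M, hM⟩ := side_const S hS hT hadj hedge p hab N
  let _ : TopologicalSpace G := ⊥
  have _ : DiscreteTopology G := ⟨rfl⟩
  refine isOpen_induced_iff.2 ⟨{f | f M ∈ {g : G | g • p ∈ halfspace T a b}},
    (isOpen_discrete _).preimage (continuous_apply M), ?_⟩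
  ext γ
  change γ.1.seq M • p ∈ halfspace T a b ↔ Ev T p γ.1.seq a b
  rcases hM γ.1 γ.2 with ⟨h1, h2⟩ | ⟨h1, h2⟩
  · exact ⟨fun _ => h2, fun _ => h1⟩
  · exact ⟨fun h => absurd h1 (not_mem_halfspace h), fun h => absurd h2 h.not_symm⟩

/-- Rays in the same connected component of the Morse boundary end on the same side of every
edge. -/
lemma ev_component (S : Finset G) (hS : Subgroup.closure (S : Set G) = ⊤) (hT : T.IsTree)
    (hadj : ∀ (g : G) (a b : VT), T.Adj a b → T.Adj (g • a) (g • b))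
    (hedge : ∀ a b : VT, T.Adj a b →
      FGUndistorted (S : Set G) (edgeStab G a b) ∧
      RelMorseEmpty (S : Set G) (edgeStab G a b)) (p : VT) {a b : VT} (hab : T.Adj a b)
    {γ γ' : GRay G (S : Set G)} (h : Ev T p γ.seq a b)
    (hc : Quot.mk (grayRel (S : Set G)) γ' ∈
      connectedComponent (α := MorseBoundary G (S : Set G)) (Quot.mk (grayRel (S : Set G)) γ)) :
    Ev T p γ'.seq a b := by
  obtain ⟨U, hU, hUe⟩ := exists_isOpen_side S hS hT hadj hedge p hab
  obtain ⟨U', hU', hUe'⟩ := exists_isOpen_side S hS hT hadj hedge p hab.symm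
  have hcl : U' = Uᶜ := by
    ext ξ
    obtain ⟨δ, rfl⟩ := Quot.exists_rep ξ
    refine (hUe' δ).trans (Iff.trans ?_ (not_congr (hUe δ)).symm)
    exact ⟨fun h => h.not_symm, fun h => (ev_or S hS hT hadj hedge p hab δ).resolve_left h⟩
  have hclopen : IsClopen U := ⟨⟨by rw [← hcl]; exact hU'⟩, hU⟩
  exact (hUe γ').1 (hclopen.connectedComponent_subset ((hUe γ).2 h) hc)

end Sides

/-! ### Rays converging to a vertex or to an end of the tree -/

section Cases

variable {G VT : Type*} [Group G] [MulAction G VT] {T : SimpleGraph VT} {p : VT}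

/-- A Morse ray which ends on the side of `x` for every edge at `x` stays near the stabiliser
of `x`: its excursions away from `x` through an edge start and end on the frontier of that edge,
so they have bounded length. -/
lemma near_vertex (S : Finset G) (hS : Subgroup.closure (S : Set G) = ⊤) (hT : T.IsTree)
    (hadj : ∀ (g : G) (a b : VT), T.Adj a b → T.Adj (g • a) (g • b))
    (hedge : ∀ a b : VT, T.Adj a b →
      FGUndistorted (S : Set G) (edgeStab G a b) ∧
      RelMorseEmpty (S : Set G) (edgeStab G a b)) (p : VT) {x : VT}
    (γ : GRay G (S : Set G)) (hx : ∀ y, T.Adj x y → Ev T p γ.seq y x) :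
    ∃ r : ℝ, ∀ n : ℕ, ∃ h ∈ MulAction.stabilizer G x, wdist (S : Set G) (γ.seq n) h ≤ r := by
  have hd := wdist_pdist hS
  obtain ⟨N, hN⟩ := γ.morse
  obtain ⟨D, hD, hDb⟩ := front_bound (p := p) S hS hT hadj hedge N le_rfl
  obtain ⟨K, hK, hKs⟩ := near_stabilizer (G := G) (S : Set G) (V := insert p (Prod.fst ''
    {e : VT × VT | T.Adj e.1 e.2 ∧ (1 : G) ∈ Front (S : Set G) T p e.1 e.2}))
    (((finite_front_one S.finite_toSet hT).image _).insert p) x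
  -- after time `n₀` the ray no longer visits the branch at `x` containing the base vertex
  obtain ⟨n₀, hn₀⟩ : ∃ n₀ : ℕ, ∀ n ≥ n₀, ∀ y, T.Adj x y → γ.seq n • p ∈ halfspace T x y →
      p ∈ halfspace T y x := by
    by_cases hpx : p = x
    · refine ⟨0, fun n _ y hy _ => ?_⟩
      change T.dist p x < T.dist p y
      rw [hpx, SimpleGraph.dist_self]
      exact (hT.connected.pos_dist_of_ne hy.ne)
    · obtain ⟨y₀, hy₀, hp⟩ := exists_halfspace_of_ne hT hpx
      obtain ⟨n₀, hn₀⟩ := hx y₀ hy₀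
      refine ⟨n₀, fun n hn y hy hny => ?_⟩
      by_cases hyy : y₀ = y
      · subst hyy
        exact absurd (hn₀ n hn) (not_mem_halfspace hny)
      · exact halfspace_step hT hy₀.symm hy hyy hp
  refine ⟨D + K + n₀, fun n => ?_⟩
  rcases lt_or_ge n n₀ with hn | hn
  · refine ⟨1, one_mem _, ?_⟩
    rw [← γ.base, γ.geod, Nat.cast_zero, sub_zero, abs_of_nonneg (Nat.cast_nonneg _)]
    have : (n : ℝ) ≤ n₀ := by exact_mod_cast hn.le
    linarith
  · have hn0 : (0 : ℝ) ≤ n₀ := Nat.cast_nonneg _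
    by_cases hnx : γ.seq n • p = x
    · obtain ⟨h, hh, hhd⟩ := hKs (γ.seq n) (Or.inl (by rw [← hnx, inv_smul_smul]))
      exact ⟨h, hh, by linarith⟩
    · obtain ⟨y, hy, hny⟩ := exists_halfspace_of_ne hT hnx
      have h0 : γ.seq 0 • p ∈ halfspace T y x := by
        rw [γ.base, one_smul]; exact hn₀ n hn y hy hny
      obtain ⟨n₁, hn₁⟩ := hx y hy
      obtain ⟨k, -, hkn, hkF⟩ := cross (p := p) hS hT hy.symm (Nat.zero_le n)
        (fun k _ _ => geodSeq_succ γ.geod k) h0 hny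
      obtain ⟨l, hnl, -, hlF⟩ := cross (p := p) hS hT hy (le_max_left n n₁)
        (fun k _ _ => geodSeq_succ γ.geod k) hny (hn₁ _ (le_max_right _ _))
      have hkF := front_symm hkF
      have hlk := hDb x y hy γ.seq γ.geod hN k l (by omega) ⟨_, hkF, (hd.self _).le⟩
        ⟨_, hlF, (hd.self _).le⟩
      obtain ⟨h, hh, hhd⟩ := hKs (γ.seq k) (Or.inr ⟨((γ.seq k)⁻¹ • x, (γ.seq k)⁻¹ • y),
        ⟨hadj _ _ _ hy, (front_iff_one hT hadj x y _).1 hkF⟩, rfl⟩)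
      refine ⟨h, hh, ?_⟩
      have h1 := hd.tri (γ.seq n) (γ.seq k) h
      have h2 : (k : ℝ) ≤ n := by exact_mod_cast hkn.le
      have h3 : (n : ℝ) ≤ l := by exact_mod_cast hnl
      rw [γ.geod, abs_of_nonneg (by linarith)] at h1
      linarith

/-- Morse rays from `1` crossing the same infinite sequence of edges are close to each other. -/
lemma near_of_common_edges (S : Finset G) (hS : Subgroup.closure (S : Set G) = ⊤) (hT : T.IsTree)
    (hadj : ∀ (g : G) (a b : VT), T.Adj a b → T.Adj (g • a) (g • b))
    (hedge : ∀ a b : VT, T.Adj a b →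
      FGUndistorted (S : Set G) (edgeStab G a b) ∧
      RelMorseEmpty (S : Set G) (edgeStab G a b)) (p : VT) {x : ℕ → VT}
    (hxadj : ∀ i, T.Adj (x i) (x (i + 1))) (hinj : Function.Injective x)
    (hp : ∀ i, p ∈ halfspace T (x (i + 1)) (x i)) (γ γ' : GRay G (S : Set G))
    (hγ : ∀ i, Ev T p γ.seq (x i) (x (i + 1))) (hγ' : ∀ i, Ev T p γ'.seq (x i) (x (i + 1))) :
    ∃ r : ℝ, ∀ n : ℕ, InNbhd (wdist (S : Set G)) (range γ'.seq) r (γ.seq n) := by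
  have hd := wdist_pdist hS
  have hcr : ∀ (γ : GRay G (S : Set G)), (∀ i, Ev T p γ.seq (x i) (x (i + 1))) → ∀ i,
      ∃ k, γ.seq k ∈ Front (S : Set G) T p (x i) (x (i + 1)) := by
    intro γ hγ i
    obtain ⟨n, hn⟩ := hγ i
    obtain ⟨k, -, -, hk⟩ := cross (p := p) hS hT (hxadj i).symm (Nat.zero_le n)
      (fun k _ _ => geodSeq_succ γ.geod k) (by rw [γ.base, one_smul]; exact hp i) (hn n le_rfl)
    exact ⟨k, front_symm hk⟩
  obtain ⟨D, hD, H⟩ := crossings_close (p := p) S hS hT hadj hedge γ γ'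
  obtain ⟨N, hN⟩ := γ'.morse
  refine ray_near hd hN γ.geod hD (by rw [γ.base]; exact ⟨0, γ'.base⟩) fun M => ?_
  -- only finitely many edges of the sequence are crossed before time `M`
  have hfin : {i : ℕ | ∃ m < M, γ.seq m ∈ Front (S : Set G) T p (x i) (x (i + 1))}.Finite := by
    have hf : (⋃ m ∈ Iio M, {e : VT × VT | T.Adj e.1 e.2 ∧
        γ.seq m ∈ Front (S : Set G) T p e.1 e.2}).Finite :=
      (finite_Iio M).biUnion fun m _ => finite_front S.finite_toSet hT hadj _
    refine (hf.preimage (f := fun i => (x i, x (i + 1)))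
      (fun i _ j _ h => hinj (Prod.mk.inj h).1)).subset ?_
    rintro i ⟨m, hm, hF⟩
    exact mem_biUnion (x := m) hm ⟨hxadj i, hF⟩
  obtain ⟨i, hi⟩ := hfin.exists_notMem
  obtain ⟨k, hk⟩ := hcr γ hγ i
  obtain ⟨k', hk'⟩ := hcr γ' hγ' i
  refine ⟨k, ?_, γ'.seq k', ⟨k', rfl⟩, H _ _ (hxadj i) _ _ hk hk'⟩
  by_contra hlt
  exact hi ⟨k, by omega, hk⟩

end Cases

/-- **Corollary 4.8** (Statement 16, `component cor`).  Under Assumption 4.1, every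
connected component of `∂_M G` that is not a singleton is contained in the image of the
natural inclusion `(∂_M G_x, G) ↪ ∂_M G` for some vertex `x` of `T`. -/
theorem component_in_vertex_group_boundary
    {G VT : Type*} [Group G] [MulAction G VT]
    (S : Finset G) (hSgen : Subgroup.closure (S : Set G) = ⊤)
    (T : SimpleGraph VT) (hact : ActsOnTree G T)
    (hedge : ∀ a b : VT, T.Adj a b →
      FGUndistorted (S : Set G) (edgeStab G a b) ∧
      RelMorseEmpty (S : Set G) (edgeStab G a b)) :
    ∀ ξ : MorseBoundary G (S : Set G),
      ¬ (connectedComponent ξ).Subsingleton →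
      ∃ x : VT,
        connectedComponent ξ ⊆ relBdryImage (S : Set G) (MulAction.stabilizer G x) := by
  intro ξ hξ
  obtain ⟨hT, hadj, -, -, -⟩ := hact
  obtain ⟨p⟩ := hT.connected.nonempty
  obtain ⟨γ₀, rfl⟩ := Quot.exists_rep ξ
  by_cases hcase : ∃ x, ∀ y, T.Adj x y → Ev T p γ₀.seq y x
  · obtain ⟨x, hx⟩ := hcase
    refine ⟨x, fun η hη => ?_⟩
    obtain ⟨γ, rfl⟩ := Quot.exists_rep η
    exact ⟨γ, rfl, near_vertex S hSgen hT hadj hedge p γ fun y hy =>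
      ev_component S hSgen hT hadj hedge p hy.symm (hx y hy) hη⟩
  · exfalso
    push Not at hcase
    choose f hf hfe using hcase
    have hfe : ∀ x, Ev T p γ₀.seq x (f x) := fun x =>
      (ev_or S hSgen hT hadj hedge p (hf x) γ₀).resolve_right (hfe x)
    -- the geodesic ray in the tree from `p` towards the end determined by `γ₀`
    set x : ℕ → VT := fun i => f^[i] p with hxdef
    have hxs : ∀ i, x (i + 1) = f (x i) := fun i => Function.iterate_succ_apply' f i p
    have hxadj : ∀ i, T.Adj (x i) (x (i + 1)) := fun i => by rw [hxs]; exact hf _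
    have hxe : ∀ i, Ev T p γ₀.seq (x i) (x (i + 1)) := fun i => by rw [hxs]; exact hfe _
    have hp : ∀ i, p ∈ halfspace T (x (i + 1)) (x i) := by
      intro i
      induction i with
      | zero =>
        change T.dist p p < T.dist p (x 1)
        rw [SimpleGraph.dist_self]
        exact hT.connected.pos_dist_of_ne (hxadj 0).ne
      | succ i ih =>
        refine halfspace_step hT (hxadj i) (hxadj (i + 1)) (fun h => ?_) ih
        have := hxe (i + 1)
        rw [← h] at this
        exact (hxe i).not_symm this
    have hmono : StrictMono fun i => T.dist p (x i) := strictMono_nat_of_lt_succ hp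
    have hinj : Function.Injective x := fun i j h => hmono.injective (congrArg (T.dist p) h)
    refine hξ fun η hη η' hη' => ?_
    obtain ⟨γ, rfl⟩ := Quot.exists_rep η
    obtain ⟨γ', rfl⟩ := Quot.exists_rep η'
    have hγ : ∀ i, Ev T p γ.seq (x i) (x (i + 1)) := fun i =>
      ev_component S hSgen hT hadj hedge p (hxadj i) (hxe i) hη
    have hγ' : ∀ i, Ev T p γ'.seq (x i) (x (i + 1)) := fun i =>
      ev_component S hSgen hT hadj hedge p (hxadj i) (hxe i) hη'
    obtain ⟨r, hr⟩ := near_of_common_edges S hSgen hT hadj hedge p hxadj hinj hp γ γ' hγ hγ'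
    obtain ⟨r', hr'⟩ := near_of_common_edges S hSgen hT hadj hedge p hxadj hinj hp γ' γ hγ' hγ
    refine Quot.sound ⟨max r r', ?_, ?_⟩
    · rintro _ ⟨n, rfl⟩
      exact (hr n).mono (le_max_left _ _)
    · rintro _ ⟨n, rfl⟩
      exact (hr' n).mono (le_max_right _ _)

end MorseGoG
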